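/- arXiv:1210.6007 — 3 statements merged into one kernel-verified Lean document; each statement's English description precedes it below -/
import Mathlib

section
/- Let u satisfy the a priori estimate assumption on Ω̂ ⊂ ℝ^{n+1} × [0,∞), and set v := √(1+|Du|²). Then at every point (x,t) ∈ Ω̂ with u(x,t) < 0 one has v(x,t)·u(x,t)² ≤ sup { v(y,0)·u(y,0)² : y with (y,0) ∈ Ω̂ and u(y,0) < 0 }. -/
open Set Filter Topology Metric

noncomputable section

/-- Divergence of a vector field on Euclidean space. -/
def vecDiv {m : ℕ} (X : EuclideanSpace ℝ (Fin m) → EuclideanSpace ℝ (Fin m))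
    (x : EuclideanSpace ℝ (Fin m)) : ℝ :=
  ∑ i, fderiv ℝ X x (EuclideanSpace.single i 1) i

/-- Spatial gradient of a time-dependent function. -/
def spatialGrad {m : ℕ} (u : EuclideanSpace ℝ (Fin m) × ℝ → ℝ)
    (x : EuclideanSpace ℝ (Fin m)) (t : ℝ) : EuclideanSpace ℝ (Fin m) :=
  gradient (fun y => u (y, t)) x

/-- The gradient function `v = √(1+|Du|²)` of the graph of `u(·,t)`. -/
def gradFn {m : ℕ} (u : EuclideanSpace ℝ (Fin m) × ℝ → ℝ)
    (x : EuclideanSpace ℝ (Fin m)) (t : ℝ) : ℝ :=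
  Real.sqrt (1 + ‖spatialGrad u x t‖ ^ 2)

/-- Graphical mean curvature flow equation
`∂u/∂t = √(1+|Du|²) · div(Du/√(1+|Du|²))` at the point `(x,t)`. -/
def mcfEqAt {m : ℕ} (u : EuclideanSpace ℝ (Fin m) × ℝ → ℝ)
    (x : EuclideanSpace ℝ (Fin m)) (t : ℝ) : Prop :=
  deriv (fun s => u (x, s)) t
    = gradFn u x t * vecDiv (fun y => (gradFn u y t)⁻¹ • spatialGrad u y t) x

/-- Derivative of `f` in the constant direction `d`, as a function of the base point. -/
def dirDeriv {X : Type*} [NormedAddCommGroup X] [NormedSpace ℝ X] (d : X) (f : X → ℝ) (p : X) : ℝ :=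
  fderiv ℝ f p d

section DirDeriv

variable {X : Type*} [NormedAddCommGroup X] [NormedSpace ℝ X] {O : Set X} {f g : X → ℝ} {p : X}

theorem ContDiffOn.dirDeriv (hO : IsOpen O) (hf : ContDiffOn ℝ (⊤ : ℕ∞) f O) (d : X) :
    ContDiffOn ℝ (⊤ : ℕ∞) (dirDeriv d f) O :=
  (hf.fderiv_of_isOpen hO (by simp)).clm_apply contDiffOn_const

theorem ContDiffOn.differentiableAt_of_isOpen (hO : IsOpen O) (hf : ContDiffOn ℝ (⊤ : ℕ∞) f O)
    (hp : p ∈ O) : DifferentiableAt ℝ f p :=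
  (hf.contDiffAt (hO.mem_nhds hp)).differentiableAt (by simp)

theorem hasDerivAt_dirDeriv (hO : IsOpen O) (hf : ContDiffOn ℝ (⊤ : ℕ∞) f O) (hp : p ∈ O) (d : X) :
    HasDerivAt (fun s : ℝ => f (p + s • d)) (dirDeriv d f p) 0 :=
  (hf.differentiableAt_of_isOpen hO hp).hasFDerivAt.hasLineDerivAt d

theorem dirDeriv_eq_of_hasDerivAt (hO : IsOpen O) (hf : ContDiffOn ℝ (⊤ : ℕ∞) f O) (hp : p ∈ O)
    {d : X} {c : ℝ} (h : HasDerivAt (fun s : ℝ => f (p + s • d)) c 0) : dirDeriv d f p = c :=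
  (hasDerivAt_dirDeriv hO hf hp d).unique h

theorem dirDeriv_congr (hO : IsOpen O) (h : EqOn f g O) (d : X) :
    EqOn (dirDeriv d f) (dirDeriv d g) O := fun p hp => by
  simp only [dirDeriv, (h.eventuallyEq_of_mem (hO.mem_nhds hp)).fderiv_eq]

theorem dirDeriv_dirDeriv (hO : IsOpen O) (hf : ContDiffOn ℝ (⊤ : ℕ∞) f O) (hp : p ∈ O) (d d' : X) :
    dirDeriv d (dirDeriv d' f) p = fderiv ℝ (fderiv ℝ f) p d d' := by
  have h : DifferentiableAt ℝ (fderiv ℝ f) p :=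
    ((hf.fderiv_of_isOpen (m := 1) hO (WithTop.coe_le_coe.2 le_top)).contDiffAt
      (hO.mem_nhds hp)).differentiableAt (by simp)
  have := (h.hasFDerivAt.clm_apply (hasFDerivAt_const d' p)).fderiv
  unfold dirDeriv
  rw [this]
  simp

theorem dirDeriv_comm (hO : IsOpen O) (hf : ContDiffOn ℝ (⊤ : ℕ∞) f O) (d d' : X) :
    EqOn (dirDeriv d (dirDeriv d' f)) (dirDeriv d' (dirDeriv d f)) O := fun p hp => by
  rw [dirDeriv_dirDeriv hO hf hp, dirDeriv_dirDeriv hO hf hp]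
  exact (hf.contDiffAt (hO.mem_nhds hp)).isSymmSndFDerivAt
    (by rw [minSmoothness_of_isRCLikeNormedField]; exact WithTop.coe_le_coe.2 le_top) d d'

theorem dirDeriv_sum_smul {ι : Type*} [Fintype ι] (c : ι → ℝ) (e : ι → X) (f : X → ℝ) (p : X) :
    dirDeriv (∑ i, c i • e i) f p = ∑ i, c i * dirDeriv (e i) f p := by
  simp [dirDeriv, map_sum]

theorem dirDeriv_dirDeriv_nonpos (hO : IsOpen O) (hf : ContDiffOn ℝ (⊤ : ℕ∞) f O) (hp : p ∈ O)
    {d : X} (hmax : ∀ᶠ s : ℝ in 𝓝 0, f (p + s • d) ≤ f p) :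
    dirDeriv d (dirDeriv d f) p ≤ 0 := by
  by_contra! hpos
  set F : ℝ → ℝ := fun s => f (p + s • d) with hF
  have hF0 : F 0 = f p := by simp [hF]
  have hmem : ∀ᶠ s : ℝ in 𝓝 0, p + s • d ∈ O := by
    have : ContinuousAt (fun s : ℝ => p + s • d) 0 := by fun_prop
    exact this.eventually (by simpa using hO.mem_nhds hp)
  have hderiv : ∀ s : ℝ, p + s • d ∈ O → HasDerivAt F (dirDeriv d f (p + s • d)) s := by
    intro s hs
    have hl : HasDerivAt (fun s : ℝ => p + s • d) d s := by
      simpa using ((hasDerivAt_id s).smul_const d).const_add p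
    exact (hf.differentiableAt_of_isOpen hO hs).hasFDerivAt.comp_hasDerivAt s hl
  have hd1 : deriv F =ᶠ[𝓝 0] fun s => dirDeriv d f (p + s • d) :=
    hmem.mono fun s hs => (hderiv s hs).deriv
  have hd2 : deriv (deriv F) 0 = dirDeriv d (dirDeriv d f) p := by
    rw [hd1.deriv_eq]
    exact (hasDerivAt_dirDeriv hO (hf.dirDeriv hO d) hp d).deriv
  have hlmax : IsLocalMax F 0 := hmax.mono fun s hs => by rw [hF0]; exact hs
  have hlmin : IsLocalMin F 0 := isLocalMin_of_deriv_deriv_pos (by rwa [hd2])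
    hlmax.deriv_eq_zero (hderiv 0 hmem.self_of_nhds).continuousAt
  have hconst : F =ᶠ[𝓝 0] fun _ => F 0 := by
    filter_upwards [hlmax, hlmin] with s h1 h2 using le_antisymm h1 h2
  have h0 : deriv (deriv F) 0 = 0 := by
    rw [hconst.deriv.deriv_eq]; simp
  linarith

theorem le_dirDeriv_of_backward_max (hO : IsOpen O) (hf : ContDiffOn ℝ (⊤ : ℕ∞) f O) (hp : p ∈ O)
    {d : X} {c : ℝ} (hmax : ∀ᶠ s : ℝ in 𝓝 0, s ≤ 0 → f (p + s • d) - c * s ≤ f p) :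
    c ≤ dirDeriv d f p := by
  have h := (hasDerivAt_dirDeriv hO hf hp d).tendsto_slope
  have h' : Tendsto (slope (fun s : ℝ => f (p + s • d)) 0) (𝓝[<] 0) (𝓝 (dirDeriv d f p)) :=
    h.mono_left (nhdsWithin_mono _ fun x hx => ne_of_lt hx)
  refine ge_of_tendsto h' ?_
  filter_upwards [hmax.filter_mono nhdsWithin_le_nhds, self_mem_nhdsWithin] with s hs hs0
  have hs0' : s < 0 := hs0
  have := hs hs0'.le
  rw [slope_def_field, le_div_iff_of_neg (by simpa using hs0')]
  simp only [zero_smul, add_zero, sub_zero]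
  linarith

theorem sum_bilin_le {ι : Type*} [Fintype ι] (B : X →L[ℝ] X →L[ℝ] ℝ) (e : ι → X) (c : ι → ℝ)
    (h : ∀ a : ι → ℝ, B (∑ i, a i • e i) (∑ i, a i • e i) ≤ 0) :
    (∑ i, c i ^ 2) * ∑ i, B (e i) (e i) ≤ B (∑ i, c i • e i) (∑ i, c i • e i) := by
  classical
  have key : ∀ i j, c i ^ 2 * B (e j) (e j) + c j ^ 2 * B (e i) (e i)
      - c i * c j * B (e i) (e j) - c i * c j * B (e j) (e i) ≤ 0 := by
    intro i j
    have := h (fun k => (if k = j then c i else 0) - (if k = i then c j else 0))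
    have hs : ∑ k, ((if k = j then c i else 0) - (if k = i then c j else 0)) • e k
        = c i • e j - c j • e i := by
      simp [sub_smul, Finset.sum_sub_distrib, ite_smul]
    rw [hs] at this
    simp only [map_sub, map_smul, sub_apply, smul_apply,
      smul_eq_mul] at this
    linarith
  have hsum := Finset.sum_nonpos fun i (_ : i ∈ Finset.univ) =>
    Finset.sum_nonpos fun j (_ : j ∈ Finset.univ) => key i j
  have e1 : ∑ i, ∑ j, c i ^ 2 * B (e j) (e j) = (∑ i, c i ^ 2) * ∑ i, B (e i) (e i) := by
    rw [Finset.sum_mul_sum]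
  have e2 : ∑ i, ∑ j, c j ^ 2 * B (e i) (e i) = (∑ i, c i ^ 2) * ∑ i, B (e i) (e i) := by
    rw [Finset.sum_comm, e1]
  have e3 : ∑ i, ∑ j, c i * c j * B (e i) (e j) = B (∑ i, c i • e i) (∑ i, c i • e i) := by
    simp only [map_sum, map_smul, sum_apply, smul_apply,
      smul_eq_mul, Finset.mul_sum]
    rw [Finset.sum_comm]
    exact Finset.sum_congr rfl fun i _ => Finset.sum_congr rfl fun j _ => by ring
  have e4 : ∑ i, ∑ j, c i * c j * B (e j) (e i) = B (∑ i, c i • e i) (∑ i, c i • e i) := by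
    rw [← e3, Finset.sum_comm]
    exact Finset.sum_congr rfl fun i _ => Finset.sum_congr rfl fun j _ => by ring
  simp only [Finset.sum_add_distrib, Finset.sum_sub_distrib, e1, e2, e3, e4] at hsum
  linarith

/-- Linearisation of the graphical mean curvature flow equation in the direction `∑ uᵢ(p) eᵢ`. -/
theorem mcf_linearisation {ι : Type*} [Fintype ι] (hO : IsOpen O) {u : X → ℝ}
    (hu : ContDiffOn ℝ (⊤ : ℕ∞) u O) (e : ι → X) (τ : X)
    (hpde : ∀ q ∈ O, (1 + ∑ i, dirDeriv (e i) u q ^ 2) * dirDeriv τ u q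
      = (1 + ∑ i, dirDeriv (e i) u q ^ 2) * ∑ i, dirDeriv (e i) (dirDeriv (e i) u) q
        - ∑ i, ∑ j, dirDeriv (e i) u q * dirDeriv (e j) u q * dirDeriv (e i) (dirDeriv (e j) u) q)
    (hp : p ∈ O) {c : ι → ℝ} (hc : ∀ i, c i = dirDeriv (e i) u p) {ξ : X} (hξ : ξ = ∑ i, c i • e i)
    {h : ι → ℝ} (hh : ∀ i, h i = dirDeriv (e i) (dirDeriv ξ u) p) {V : ℝ}
    (hV : V = 1 + ∑ i, c i ^ 2) :
    V * dirDeriv τ u p = V * ∑ i, dirDeriv (e i) (dirDeriv (e i) u) p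
        - dirDeriv ξ (dirDeriv ξ u) p ∧
    V * (V * dirDeriv τ (dirDeriv ξ u) p - V * ∑ i, dirDeriv (e i) (dirDeriv (e i) (dirDeriv ξ u)) p
        + dirDeriv ξ (dirDeriv ξ (dirDeriv ξ u)) p)
      = 2 * (∑ i, c i * h i) ^ 2 - 2 * V * ∑ i, h i ^ 2 := by
  have hd := fun d => hu.dirDeriv hO d
  have hdd := fun d d' => (hd d).dirDeriv hO d'
  have hξu : ∀ q, dirDeriv ξ u q = ∑ i, c i * dirDeriv (e i) u q := fun q => by
    rw [hξ, dirDeriv_sum_smul]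
  have hξξ : ∀ q ∈ O, dirDeriv ξ (dirDeriv ξ u) q
      = ∑ i, ∑ j, c i * c j * dirDeriv (e i) (dirDeriv (e j) u) q := by
    intro q hq
    conv_lhs => rw [hξ]
    rw [dirDeriv_sum_smul]
    refine Finset.sum_congr rfl fun i _ => ?_
    rw [← hξ, dirDeriv_comm hO hu _ _ hq]
    conv_lhs => rw [hξ]
    rw [dirDeriv_sum_smul, Finset.mul_sum]
    refine Finset.sum_congr rfl fun j _ => ?_
    rw [dirDeriv_comm hO hu _ _ hq]
    ring
  have hhi : ∀ i, h i = ∑ j, c j * dirDeriv (e i) (dirDeriv (e j) u) p := by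
    intro i
    rw [hh, dirDeriv_comm hO hu _ _ hp]
    conv_lhs => rw [hξ]
    rw [dirDeriv_sum_smul]
    exact Finset.sum_congr rfl fun j _ => by rw [dirDeriv_comm hO hu _ _ hp]
  have hk : dirDeriv ξ (dirDeriv ξ u) p = ∑ i, c i * h i := by
    conv_lhs => rw [hξ]
    rw [dirDeriv_sum_smul, ← hξ]
    simp only [hh]
  have hp0 : V * dirDeriv τ u p = V * ∑ i, dirDeriv (e i) (dirDeriv (e i) u) p
      - dirDeriv ξ (dirDeriv ξ u) p := by
    have := hpde p hp
    simp only [← hc] at this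
    rw [← hV] at this
    rw [this, hξξ p hp]
  refine ⟨hp0, ?_⟩
  -- differentiate the equation along `ξ`
  have hD := fun d => hasDerivAt_dirDeriv hO (hd d) hp ξ
  have hDD := fun d d' => hasDerivAt_dirDeriv hO (hdd d d') hp ξ
  have hVd : HasDerivAt (fun s : ℝ => 1 + ∑ i, dirDeriv (e i) u (p + s • ξ) ^ 2)
      (∑ i, 2 * c i * h i) 0 := by
    refine (HasDerivAt.fun_sum fun i _ => ?_).const_add 1
    refine ((hD (e i)).fun_pow 2).congr_deriv ?_
    rw [dirDeriv_comm hO hu _ _ hp]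
    simp [hc, hh]
  have hL := hVd.fun_mul (hD τ)
  have hR := (hVd.fun_mul (HasDerivAt.fun_sum fun i (_ : i ∈ Finset.univ) =>
    hDD (e i) (e i))).fun_sub (HasDerivAt.fun_sum fun i (_ : i ∈ Finset.univ) =>
      HasDerivAt.fun_sum fun j (_ : j ∈ Finset.univ) =>
        ((hD (e i)).fun_mul (hD (e j))).fun_mul (hDD (e j) (e i)))
  have hmem : ∀ᶠ s : ℝ in 𝓝 0, p + s • ξ ∈ O := by
    have : ContinuousAt (fun s : ℝ => p + s • ξ) 0 := by fun_prop
    exact this.eventually (by simpa using hO.mem_nhds hp)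
  have hE := hL.unique (hR.congr_of_eventuallyEq (hmem.mono fun s hs => hpde _ hs))
  simp only [zero_smul, add_zero, ← hc] at hE
  rw [← hV] at hE
  have hDh : ∀ i, dirDeriv ξ (dirDeriv (e i) u) p = h i := fun i => by
    rw [hh, dirDeriv_comm hO hu _ _ hp]
  have hττ : dirDeriv τ (dirDeriv ξ u) p = dirDeriv ξ (dirDeriv τ u) p := dirDeriv_comm hO hu _ _ hp
  have hii : ∀ i, dirDeriv (e i) (dirDeriv (e i) (dirDeriv ξ u)) p
      = dirDeriv ξ (dirDeriv (e i) (dirDeriv (e i) u)) p := fun i => by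
    rw [dirDeriv_congr hO (dirDeriv_comm hO hu (e i) ξ) (e i) hp, dirDeriv_comm hO (hd _) _ _ hp]
  have hξξξ : dirDeriv ξ (dirDeriv ξ (dirDeriv ξ u)) p
      = ∑ i, ∑ j, c i * c j * dirDeriv ξ (dirDeriv (e i) (dirDeriv (e j) u)) p := by
    refine dirDeriv_eq_of_hasDerivAt hO (hdd ξ ξ) hp ?_
    refine HasDerivAt.congr_of_eventuallyEq ?_ (hmem.mono fun s hs => hξξ _ hs)
    exact HasDerivAt.fun_sum fun i _ => HasDerivAt.fun_sum fun j _ => (hDD (e j) (e i)).const_mul _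
  have hcross : ∑ i, ∑ j, ((h i * c j + c i * h j) * dirDeriv (e i) (dirDeriv (e j) u) p
      + c i * c j * dirDeriv ξ (dirDeriv (e i) (dirDeriv (e j) u)) p)
      = 2 * ∑ i, h i ^ 2 + dirDeriv ξ (dirDeriv ξ (dirDeriv ξ u)) p := by
    have a1 : ∑ i, ∑ j, h i * c j * dirDeriv (e i) (dirDeriv (e j) u) p = ∑ i, h i ^ 2 := by
      refine Finset.sum_congr rfl fun i _ => ?_
      rw [sq]
      nth_rewrite 3 [hhi i]
      rw [Finset.mul_sum]
      exact Finset.sum_congr rfl fun j _ => by ring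
    have a2 : ∑ i, ∑ j, c i * h j * dirDeriv (e i) (dirDeriv (e j) u) p = ∑ i, h i ^ 2 := by
      rw [← a1, Finset.sum_comm]
      refine Finset.sum_congr rfl fun i _ => Finset.sum_congr rfl fun j _ => ?_
      rw [dirDeriv_comm hO hu _ _ hp]
      ring
    simp only [add_mul, Finset.sum_add_distrib, a1, a2, ← hξξξ]
    ring
  simp only [hDh, hcross] at hE
  have hsum : ∑ i, 2 * c i * h i = 2 * ∑ i, c i * h i := by
    rw [Finset.mul_sum]
    exact Finset.sum_congr rfl fun i _ => by ring
  rw [hsum] at hE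
  rw [hττ]
  simp only [hii]
  rw [hk] at hp0
  linear_combination V * hE - 2 * (∑ i, c i * h i) * hp0

/-- The function `(1 + D_ξ u) u²`, `ξ = Du(p)`, is a subsolution at `p` of the linear
parabolic equation with coefficients `V δᵢⱼ - ξᵢ ξⱼ`, where `V = 1 + |ξ|²`. -/
theorem mcf_subsolution {ι : Type*} [Fintype ι] (hO : IsOpen O) {u : X → ℝ}
    (hu : ContDiffOn ℝ (⊤ : ℕ∞) u O) (e : ι → X) (τ : X)
    (hpde : ∀ q ∈ O, (1 + ∑ i, dirDeriv (e i) u q ^ 2) * dirDeriv τ u q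
      = (1 + ∑ i, dirDeriv (e i) u q ^ 2) * ∑ i, dirDeriv (e i) (dirDeriv (e i) u) q
        - ∑ i, ∑ j, dirDeriv (e i) u q * dirDeriv (e j) u q * dirDeriv (e i) (dirDeriv (e j) u) q)
    (hp : p ∈ O) {c : ι → ℝ} (hc : ∀ i, c i = dirDeriv (e i) u p) {ξ : X} (hξ : ξ = ∑ i, c i • e i)
    {V : ℝ} (hV : V = 1 + ∑ i, c i ^ 2) {φ : X → ℝ}
    (hφ : φ = fun q => (1 + dirDeriv ξ u q) * u q ^ 2) :
    V * dirDeriv τ φ p - V * ∑ i, dirDeriv (e i) (dirDeriv (e i) φ) p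
      + dirDeriv ξ (dirDeriv ξ φ) p ≤ 0 := by
  have hψ := hu.dirDeriv hO ξ
  have hφs : ContDiffOn ℝ (⊤ : ℕ∞) φ O := by
    rw [hφ]; exact (contDiffOn_const.add hψ).mul (hu.pow 2)
  obtain ⟨h0, h1⟩ := mcf_linearisation hO hu e τ hpde hp hc hξ
    (h := fun i => dirDeriv (e i) (dirDeriv ξ u) p) (fun i => rfl) hV
  have hd : ∀ d, ∀ q ∈ O, dirDeriv d φ q = dirDeriv d (dirDeriv ξ u) q * u q ^ 2
      + (1 + dirDeriv ξ u q) * (2 * u q * dirDeriv d u q) := by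
    intro d q hq
    refine dirDeriv_eq_of_hasDerivAt hO hφs hq ?_
    rw [hφ]
    refine (((hasDerivAt_dirDeriv hO hψ hq d).const_add 1).fun_mul
      ((hasDerivAt_dirDeriv hO hu hq d).fun_pow 2)).congr_deriv ?_
    simp
  have hdd : ∀ d, dirDeriv d (dirDeriv d φ) p = dirDeriv d (dirDeriv d (dirDeriv ξ u)) p * u p ^ 2
      + 4 * u p * (dirDeriv d (dirDeriv ξ u) p * dirDeriv d u p)
      + 2 * (1 + dirDeriv ξ u p) * (dirDeriv d u p ^ 2 + u p * dirDeriv d (dirDeriv d u) p) := by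
    intro d
    rw [dirDeriv_congr hO (hd d) d hp]
    have hs : ContDiffOn ℝ (⊤ : ℕ∞) (fun q => dirDeriv d (dirDeriv ξ u) q * u q ^ 2
      + (1 + dirDeriv ξ u q) * (2 * u q * dirDeriv d u q)) O :=
      ((hψ.dirDeriv hO d).mul (hu.pow 2)).add
        ((contDiffOn_const.add hψ).mul ((contDiffOn_const.mul hu).mul (hu.dirDeriv hO d)))
    refine dirDeriv_eq_of_hasDerivAt hO hs hp ?_
    refine (((hasDerivAt_dirDeriv hO (hψ.dirDeriv hO d) hp d).fun_mul
      ((hasDerivAt_dirDeriv hO hu hp d).fun_pow 2)).fun_add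
      (((hasDerivAt_dirDeriv hO hψ hp d).const_add 1).fun_mul
        (((hasDerivAt_dirDeriv hO hu hp d).const_mul 2).fun_mul
          (hasDerivAt_dirDeriv hO (hu.dirDeriv hO d) hp d)))).congr_deriv ?_
    simp
    ring
  have hψp : dirDeriv ξ u p = V - 1 := by
    rw [hV]
    nth_rewrite 1 [hξ]
    rw [dirDeriv_sum_smul]
    simp only [← hc, sq]
    ring
  have hk : dirDeriv ξ (dirDeriv ξ u) p = ∑ i, c i * dirDeriv (e i) (dirDeriv ξ u) p := by
    conv_lhs => rw [hξ]
    rw [dirDeriv_sum_smul, ← hξ]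
  have hcs := Finset.sum_mul_sq_le_sq_mul_sq Finset.univ c
    (fun i => u p * dirDeriv (e i) (dirDeriv ξ u) p + V * c i)
  have hS : ∑ i, c i ^ 2 = V - 1 := by rw [hV]; ring
  have s1 : ∑ i, c i * (u p * dirDeriv (e i) (dirDeriv ξ u) p + V * c i)
      = u p * (∑ i, c i * dirDeriv (e i) (dirDeriv ξ u) p) + V * (V - 1) := by
    rw [← hS, Finset.mul_sum, Finset.mul_sum, ← Finset.sum_add_distrib]
    exact Finset.sum_congr rfl fun i _ => by ring
  have s2 : ∑ i, (u p * dirDeriv (e i) (dirDeriv ξ u) p + V * c i) ^ 2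
      = u p ^ 2 * (∑ i, dirDeriv (e i) (dirDeriv ξ u) p ^ 2)
        + 2 * u p * V * (∑ i, c i * dirDeriv (e i) (dirDeriv ξ u) p) + V ^ 2 * (V - 1) := by
    rw [← hS, Finset.mul_sum, Finset.mul_sum, Finset.mul_sum, ← Finset.sum_add_distrib,
      ← Finset.sum_add_distrib]
    exact Finset.sum_congr rfl fun i _ => by ring
  have hX : 0 ≤ ∑ i, (u p * dirDeriv (e i) (dirDeriv ξ u) p + V * c i) ^ 2 :=
    Finset.sum_nonneg fun i _ => sq_nonneg _
  rw [s1, hS] at hcs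
  rw [s2] at hcs hX
  have hVpos : 0 < V := by
    have := Finset.sum_nonneg fun i (_ : i ∈ Finset.univ) => sq_nonneg (c i)
    linarith
  have s3 : ∑ i, dirDeriv (e i) (dirDeriv (e i) φ) p
      = (∑ i, dirDeriv (e i) (dirDeriv (e i) (dirDeriv ξ u)) p) * u p ^ 2
        + 4 * u p * (∑ i, c i * dirDeriv (e i) (dirDeriv ξ u) p)
        + 2 * V * ((V - 1) + u p * ∑ i, dirDeriv (e i) (dirDeriv (e i) u) p) := by
    rw [← hS, Finset.sum_mul, Finset.mul_sum, Finset.mul_sum, ← Finset.sum_add_distrib,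
      ← Finset.sum_add_distrib, Finset.mul_sum, ← Finset.sum_add_distrib]
    refine Finset.sum_congr rfl fun i _ => ?_
    rw [hdd, hψp, ← hc]
    ring
  rw [s3, hd τ p hp, hdd ξ, hψp]
  rw [hk] at h0 ⊢
  generalize (∑ i, c i * dirDeriv (e i) (dirDeriv ξ u) p) = k at *
  generalize (∑ i, dirDeriv (e i) (dirDeriv ξ u) p ^ 2) = H at *
  refine nonpos_of_mul_nonpos_right (a := V) ?_ hVpos
  have hE : (u p * k + V * (V - 1)) ^ 2 ≤
      V * (u p ^ 2 * H + 2 * u p * V * k + V ^ 2 * (V - 1)) := by linarith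
  linear_combination 2 * hE + u p ^ 2 * h1 + 2 * V ^ 2 * u p * h0

end DirDeriv

section Graph

variable {m : ℕ} {O : Set (EuclideanSpace ℝ (Fin m) × ℝ)} {u : EuclideanSpace ℝ (Fin m) × ℝ → ℝ}

/-- The `i`-th spatial coordinate direction in space-time. -/
def spaceDir (i : Fin m) : EuclideanSpace ℝ (Fin m) × ℝ := (EuclideanSpace.single i 1, 0)

theorem spatialGrad_apply {x : EuclideanSpace ℝ (Fin m)} {t : ℝ}
    (h : DifferentiableAt ℝ u (x, t)) (i : Fin m) :
    spatialGrad u x t i = dirDeriv (spaceDir i) u (x, t) := by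
  have h1 : HasFDerivAt (fun y => u (y, t))
      ((fderiv ℝ u (x, t)).comp (ContinuousLinearMap.inl ℝ _ ℝ)) x :=
    h.hasFDerivAt.comp x (hasFDerivAt_prodMk_left x t)
  have h2 : spatialGrad u x t i = inner ℝ (spatialGrad u x t) (EuclideanSpace.single i (1 : ℝ)) := by
    simp [EuclideanSpace.inner_single_right]
  rw [h2, spatialGrad, gradient, InnerProductSpace.toDual_symm_apply, h1.fderiv]
  simp [dirDeriv, spaceDir]

theorem gradFn_eq {x : EuclideanSpace ℝ (Fin m)} {t : ℝ} (h : DifferentiableAt ℝ u (x, t)) :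
    gradFn u x t = Real.sqrt (1 + ∑ i, dirDeriv (spaceDir i) u (x, t) ^ 2) := by
  simp only [gradFn, EuclideanSpace.real_norm_sq_eq, spatialGrad_apply h]

theorem one_add_sum_sq_pos {ι : Type*} [Fintype ι] (a : ι → ℝ) : 0 < 1 + ∑ i, a i ^ 2 := by
  have := Finset.sum_nonneg fun i (_ : i ∈ Finset.univ) => sq_nonneg (a i)
  linarith

/-- Mean curvature flow in non-divergence form. -/
theorem mcfEqAt.nondivergence (hO : IsOpen O) (hu : ContDiffOn ℝ (⊤ : ℕ∞) u O)
    {p : EuclideanSpace ℝ (Fin m) × ℝ} (hp : p ∈ O) (h : mcfEqAt u p.1 p.2) :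
    (1 + ∑ i, dirDeriv (spaceDir i) u p ^ 2) * dirDeriv ((0, 1) : EuclideanSpace ℝ (Fin m) × ℝ) u p
      = (1 + ∑ i, dirDeriv (spaceDir i) u p ^ 2) *
          ∑ i, dirDeriv (spaceDir i) (dirDeriv (spaceDir i) u) p
        - ∑ i, ∑ j, dirDeriv (spaceDir i) u p * dirDeriv (spaceDir j) u p *
            dirDeriv (spaceDir i) (dirDeriv (spaceDir j) u) p := by
  obtain ⟨x, t⟩ := p
  have hdiff : ∀ q ∈ O, DifferentiableAt ℝ u q := fun q hq => hu.differentiableAt_of_isOpen hO hq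
  have hd := fun i : Fin m => hu.dirDeriv hO (spaceDir i)
  set W : EuclideanSpace ℝ (Fin m) × ℝ → ℝ := fun q => 1 + ∑ i, dirDeriv (spaceDir i) u q ^ 2
    with hW
  have hWpos : ∀ q, 0 < W q := fun q => one_add_sum_sq_pos _
  set Y : EuclideanSpace ℝ (Fin m) → EuclideanSpace ℝ (Fin m) :=
    fun y => (gradFn u y t)⁻¹ • spatialGrad u y t with hY
  set G : Fin m → EuclideanSpace ℝ (Fin m) × ℝ → ℝ :=
    fun i q => (Real.sqrt (W q))⁻¹ * dirDeriv (spaceDir i) u q with hG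
  have hYG : ∀ i, ∀ y, (y, t) ∈ O → Y y i = G i (y, t) := by
    intro i y hy
    simp only [hY, hG, hW, PiLp.smul_apply, smul_eq_mul, spatialGrad_apply (hdiff _ hy),
      gradFn_eq (hdiff _ hy)]
  have hmem : ∀ᶠ y in 𝓝 x, (y, t) ∈ O := by
    have : ContinuousAt (fun y : EuclideanSpace ℝ (Fin m) => (y, t)) x := by fun_prop
    exact this.eventually (hO.mem_nhds hp)
  have hdd := fun i => (hd i).differentiableAt_of_isOpen hO hp
  have hGd : ∀ i, DifferentiableAt ℝ (G i) (x, t) := by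
    intro i
    have hWd : DifferentiableAt ℝ W (x, t) := by
      simp only [hW]
      exact (DifferentiableAt.fun_sum fun j _ => (hdd j).fun_pow 2).const_add 1
    exact ((hWd.sqrt (hWpos _).ne').inv (Real.sqrt_pos.2 (hWpos _)).ne').mul (hdd i)
  have hYi : ∀ i, HasFDerivAt (fun y => Y y i)
      ((fderiv ℝ (G i) (x, t)).comp (ContinuousLinearMap.inl ℝ _ ℝ)) x := by
    intro i
    have h1 : HasFDerivAt (fun y => G i (y, t))
        ((fderiv ℝ (G i) (x, t)).comp (ContinuousLinearMap.inl ℝ _ ℝ)) x :=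
      ((hGd i).hasFDerivAt (x := (x, t))).comp (f := fun y => (y, t)) x (hasFDerivAt_prodMk_left x t)
    exact h1.congr_of_eventuallyEq (hmem.mono fun y hy => hYG i y hy)
  have hYd : DifferentiableAt ℝ Y x := differentiableAt_euclidean.2 fun i => (hYi i).differentiableAt
  have hcomp : ∀ i, fderiv ℝ Y x (EuclideanSpace.single i 1) i = dirDeriv (spaceDir i) (G i) (x, t) := by
    intro i
    have h1 := ((EuclideanSpace.proj (𝕜 := ℝ) i).hasFDerivAt (x := Y x)).comp x hYd.hasFDerivAt
    have h2 := h1.unique (hYi i)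
    have h3 := congrArg (fun L => L (EuclideanSpace.single i (1 : ℝ))) h2
    simpa [dirDeriv, spaceDir] using h3
  set v := Real.sqrt (W (x, t)) with hv
  have hvpos : 0 < v := Real.sqrt_pos.2 (hWpos _)
  have hvsq : v ^ 2 = W (x, t) := Real.sq_sqrt (hWpos _).le
  have hGval : ∀ i, v ^ 3 * dirDeriv (spaceDir i) (G i) (x, t)
      = v ^ 2 * dirDeriv (spaceDir i) (dirDeriv (spaceDir i) u) (x, t)
        - ∑ j, dirDeriv (spaceDir i) u (x, t) * dirDeriv (spaceDir j) u (x, t) *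
            dirDeriv (spaceDir i) (dirDeriv (spaceDir j) u) (x, t) := by
    intro i
    have hWl : HasDerivAt (fun s : ℝ => W ((x, t) + s • spaceDir i))
        (∑ j, 2 * dirDeriv (spaceDir j) u (x, t) *
          dirDeriv (spaceDir i) (dirDeriv (spaceDir j) u) (x, t)) 0 := by
      refine (HasDerivAt.fun_sum fun j _ => ?_).const_add 1
      refine ((hasDerivAt_dirDeriv hO (hd j) hp (spaceDir i)).fun_pow 2).congr_deriv ?_
      simp
    have hz : (x, t) + (0 : ℝ) • spaceDir i = (x, t) := by simp
    have hvl := hWl.sqrt (by rw [hz]; exact (hWpos _).ne')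
    have hil := hvl.fun_inv (by rw [hz]; exact hvpos.ne')
    have hGl := hil.fun_mul (hasDerivAt_dirDeriv hO (hd i) hp (spaceDir i))
    have := ((hGd i).hasFDerivAt.hasLineDerivAt (spaceDir i)).unique hGl
    rw [hz, ← hv] at this
    have hs : ∑ j, 2 * dirDeriv (spaceDir j) u (x, t) *
          dirDeriv (spaceDir i) (dirDeriv (spaceDir j) u) (x, t)
        = 2 * ∑ j, dirDeriv (spaceDir j) u (x, t) *
          dirDeriv (spaceDir i) (dirDeriv (spaceDir j) u) (x, t) := by
      rw [Finset.mul_sum]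
      exact Finset.sum_congr rfl fun j _ => by ring
    have hs' : ∑ j, dirDeriv (spaceDir i) u (x, t) * dirDeriv (spaceDir j) u (x, t) *
            dirDeriv (spaceDir i) (dirDeriv (spaceDir j) u) (x, t)
        = dirDeriv (spaceDir i) u (x, t) * ∑ j, dirDeriv (spaceDir j) u (x, t) *
          dirDeriv (spaceDir i) (dirDeriv (spaceDir j) u) (x, t) := by
      rw [Finset.mul_sum]
      exact Finset.sum_congr rfl fun j _ => by ring
    rw [hs] at this
    rw [hs', dirDeriv, this]
    field_simp
    ring
  have ht : deriv (fun s => u (x, s)) t = dirDeriv ((0, 1) : EuclideanSpace ℝ (Fin m) × ℝ) u (x, t) := by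
    have h1 : HasFDerivAt (fun s => u (x, s))
        ((fderiv ℝ u (x, t)).comp (ContinuousLinearMap.inr ℝ _ ℝ)) t :=
      (hdiff _ hp).hasFDerivAt.comp t (hasFDerivAt_prodMk_right x t)
    rw [h1.hasDerivAt.deriv]
    simp [dirDeriv]
  have hmain : dirDeriv ((0, 1) : EuclideanSpace ℝ (Fin m) × ℝ) u (x, t)
      = v * ∑ i, dirDeriv (spaceDir i) (G i) (x, t) := by
    rw [← ht]
    simp only [← hcomp]
    have := h
    rw [mcfEqAt, gradFn_eq (hdiff _ hp)] at this
    exact this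
  have hsum := Finset.sum_congr rfl fun i (_ : i ∈ Finset.univ) => hGval i
  rw [← Finset.mul_sum, Finset.sum_sub_distrib, ← Finset.mul_sum] at hsum
  change W (x, t) * _ = W (x, t) * _ - _
  rw [← hvsq, hmain]
  linear_combination hsum

/-- `v u² - ε t` has no backward-in-time local maximum along mean curvature flow. -/
theorem mcf_no_backward_local_max (hO : IsOpen O) (hu : ContDiffOn ℝ (⊤ : ℕ∞) u O)
    (heq : ∀ p ∈ O, mcfEqAt u p.1 p.2) {p : EuclideanSpace ℝ (Fin m) × ℝ} (hp : p ∈ O)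
    {ε : ℝ} (hε : 0 < ε)
    (hmax : ∀ᶠ q in 𝓝 p, q.2 ≤ p.2 →
      gradFn u q.1 q.2 * u q ^ 2 - ε * q.2 ≤ gradFn u p.1 p.2 * u p ^ 2 - ε * p.2) : False := by
  set τ : EuclideanSpace ℝ (Fin m) × ℝ := (0, 1) with hτ
  set c : Fin m → ℝ := fun i => dirDeriv (spaceDir i) u p with hc
  set ξ : EuclideanSpace ℝ (Fin m) × ℝ := ∑ i, c i • spaceDir i with hξ
  set V : ℝ := 1 + ∑ i, c i ^ 2 with hV
  set φ : EuclideanSpace ℝ (Fin m) × ℝ → ℝ := fun q => (1 + dirDeriv ξ u q) * u q ^ 2 with hφ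
  have hVpos : 0 < V := one_add_sum_sq_pos _
  have hφs : ContDiffOn ℝ (⊤ : ℕ∞) φ O := (contDiffOn_const.add (hu.dirDeriv hO ξ)).mul (hu.pow 2)
  have hsub := mcf_subsolution hO hu spaceDir τ (fun q hq => (heq q hq).nondivergence hO hu hq) hp
    (c := c) (fun i => rfl) hξ hV hφ
  set v := Real.sqrt V with hv
  have hvpos : 0 < v := Real.sqrt_pos.2 hVpos
  have hvsq : v * v = V := Real.mul_self_sqrt hVpos.le
  have hgp : gradFn u p.1 p.2 = v := gradFn_eq (hu.differentiableAt_of_isOpen hO hp)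
  have hφp : φ p = v * (gradFn u p.1 p.2 * u p ^ 2) := by
    simp only [hφ, hgp]
    rw [← mul_assoc, hvsq, hξ, dirDeriv_sum_smul, hV]
    simp only [hc, sq]
  have hφle : ∀ q ∈ O, φ q ≤ v * (gradFn u q.1 q.2 * u q ^ 2) := by
    intro q hq
    have hgq : gradFn u q.1 q.2 = Real.sqrt (1 + ∑ i, dirDeriv (spaceDir i) u q ^ 2) :=
      gradFn_eq (hu.differentiableAt_of_isOpen hO hq)
    simp only [hφ]
    rw [← mul_assoc]
    refine mul_le_mul_of_nonneg_right ?_ (sq_nonneg _)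
    rw [hgq, hv, ← Real.sqrt_mul hVpos.le, hξ, dirDeriv_sum_smul]
    refine Real.le_sqrt_of_sq_le ?_
    have hcs := Finset.sum_mul_sq_le_sq_mul_sq Finset.univ c
      (fun i => dirDeriv (spaceDir i) u q)
    have h1 := Finset.sum_nonneg fun i (_ : i ∈ Finset.univ) =>
      sq_nonneg (c i - dirDeriv (spaceDir i) u q)
    have h2 : ∑ i, (c i - dirDeriv (spaceDir i) u q) ^ 2 = ∑ i, c i ^ 2
        - 2 * (∑ i, c i * dirDeriv (spaceDir i) u q) + ∑ i, dirDeriv (spaceDir i) u q ^ 2 := by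
      rw [Finset.mul_sum, ← Finset.sum_sub_distrib, ← Finset.sum_add_distrib]
      exact Finset.sum_congr rfl fun i _ => by ring
    rw [h2] at h1
    rw [hV]
    linarith
  have hφmax : ∀ᶠ q in 𝓝 p, q.2 ≤ p.2 → φ q - v * ε * (q.2 - p.2) ≤ φ p := by
    filter_upwards [hmax, hO.mem_nhds hp] with q hq hqO hqt
    rw [hφp]
    have := mul_le_mul_of_nonneg_left (hq hqt) hvpos.le
    linarith [hφle q hqO]
  have hline : ∀ d : EuclideanSpace ℝ (Fin m) × ℝ, Tendsto (fun s : ℝ => p + s • d) (𝓝 0) (𝓝 p) := by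
    intro d
    have : ContinuousAt (fun s : ℝ => p + s • d) 0 := by fun_prop
    simpa [ContinuousAt] using this
  have htime : v * ε ≤ dirDeriv τ φ p := by
    refine le_dirDeriv_of_backward_max hO hφs hp ?_
    filter_upwards [(hline τ).eventually hφmax] with s hs hs0
    have := hs (by simpa [hτ] using hs0)
    simpa [hτ] using this
  have hspace : ∀ a : Fin m → ℝ,
      fderiv ℝ (fderiv ℝ φ) p (∑ i, a i • spaceDir i) (∑ i, a i • spaceDir i) ≤ 0 := by
    intro a
    rw [← dirDeriv_dirDeriv hO hφs hp]
    refine dirDeriv_dirDeriv_nonpos hO hφs hp ?_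
    filter_upwards [(hline (∑ i, a i • spaceDir i)).eventually hφmax] with s hs
    have h2 : (p + s • ∑ i, a i • spaceDir i).2 = p.2 := by
      simp [spaceDir, Prod.snd_sum]
    rw [h2] at hs
    simpa using hs le_rfl
  have hB := sum_bilin_le (fderiv ℝ (fderiv ℝ φ) p) spaceDir c hspace
  have htr : ∑ i, fderiv ℝ (fderiv ℝ φ) p (spaceDir i) (spaceDir i) ≤ 0 := by
    refine Finset.sum_nonpos fun i _ => ?_
    have := hspace (Pi.single i 1)
    simpa [Pi.single_apply, ite_smul] using this
  rw [← hξ] at hB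
  simp only [dirDeriv_dirDeriv hO hφs hp] at hsub
  have : 0 < V * (v * ε) := by positivity
  have := mul_le_mul_of_nonneg_left htime hVpos.le
  have hS : ∑ i, c i ^ 2 = V - 1 := by rw [hV]; ring
  rw [hS] at hB
  linarith

theorem isOpen_inter_pos {Ω : Set (EuclideanSpace ℝ (Fin m) × ℝ)}
    (hΩ : ∃ U, IsOpen U ∧ Ω = U ∩ {p | 0 ≤ p.2}) : IsOpen (Ω ∩ {p | 0 < p.2}) := by
  obtain ⟨U, hU, rfl⟩ := hΩ
  have : U ∩ {q : EuclideanSpace ℝ (Fin m) × ℝ | 0 ≤ q.2} ∩ {q | 0 < q.2} = U ∩ {q | 0 < q.2} := by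
    ext q
    exact ⟨fun h => ⟨h.1.1, h.2⟩, fun h => ⟨⟨h.1, h.2.out.le⟩, h.2⟩⟩
  rw [this]
  exact hU.inter (isOpen_lt continuous_const continuous_snd)

/-- If `fderiv ℝ u` extends continuously to `t = 0`, the extension is the derivative of `u`
within `Ω`. -/
theorem hasFDerivWithinAt_of_continuousOn_extension {Ω : Set (EuclideanSpace ℝ (Fin m) × ℝ)}
    (hΩ : ∃ U, IsOpen U ∧ Ω = U ∩ {p | 0 ≤ p.2}) (hu_cont : ContinuousOn u Ω)
    (hu_smooth : ContDiffOn ℝ (⊤ : ℕ∞) u (Ω ∩ {p | 0 < p.2})) {T : ℝ}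
    {G : EuclideanSpace ℝ (Fin m) × ℝ → (EuclideanSpace ℝ (Fin m) × ℝ) →L[ℝ] ℝ}
    (hG : ContinuousOn G (Ω ∩ {p | p.2 ≤ T})) (hGu : ∀ p ∈ Ω, 0 < p.2 → p.2 ≤ T → fderiv ℝ u p = G p)
    {p : EuclideanSpace ℝ (Fin m) × ℝ} (hp : p ∈ Ω) (hpT : p.2 < T) :
    HasFDerivWithinAt u (G p) Ω p := by
  obtain ⟨U, hU, rfl⟩ := hΩ
  have hopen : IsOpen (U ∩ {q : EuclideanSpace ℝ (Fin m) × ℝ | q.2 < T}) :=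
    hU.inter (isOpen_lt continuous_snd continuous_const)
  obtain ⟨δ, hδ, hball⟩ := Metric.nhds_basis_closedBall.mem_iff.1 (hopen.mem_nhds ⟨hp.1, hpT⟩)
  set s : Set (EuclideanSpace ℝ (Fin m) × ℝ) := ball p δ ∩ {q | 0 < q.2} with hs
  have hpos : IsOpen {q : EuclideanSpace ℝ (Fin m) × ℝ | 0 < q.2} :=
    isOpen_lt continuous_const continuous_snd
  have hnonneg : IsClosed {q : EuclideanSpace ℝ (Fin m) × ℝ | 0 ≤ q.2} :=
    isClosed_le continuous_const continuous_snd
  have hso : IsOpen s := isOpen_ball.inter hpos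
  have hsub : s ⊆ closedBall p δ ∩ {q | 0 ≤ q.2} := fun q hq =>
    ⟨ball_subset_closedBall hq.1, hq.2.out.le⟩
  have hcl : closure s ⊆ U ∩ {q | 0 ≤ q.2} ∩ {q | q.2 ≤ T} := fun q hq => by
    have h1 := closure_minimal hsub (isClosed_closedBall.inter hnonneg) hq
    have h2 := hball h1.1
    exact ⟨⟨h2.1, h1.2⟩, h2.2.out.le⟩
  have hclpos : closure {q : EuclideanSpace ℝ (Fin m) × ℝ | 0 < q.2} = {q | 0 ≤ q.2} := by
    have h1 : {q : EuclideanSpace ℝ (Fin m) × ℝ | 0 < q.2} = univ ×ˢ Ioi 0 := by ext; simp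
    have h2 : {q : EuclideanSpace ℝ (Fin m) × ℝ | 0 ≤ q.2} = univ ×ˢ Ici 0 := by ext; simp
    rw [h1, h2, closure_prod_eq, closure_univ, closure_Ioi]
  have hnhds : closure s ∈ 𝓝[U ∩ {q | 0 ≤ q.2}] p := by
    refine mem_nhdsWithin.2 ⟨ball p δ, isOpen_ball, mem_ball_self hδ, fun q hq => ?_⟩
    exact isOpen_ball.inter_closure ⟨hq.1, hclpos ▸ hq.2.2⟩
  have hsmem : ∀ q ∈ s, q ∈ U ∩ {q | 0 ≤ q.2} ∧ 0 < q.2 ∧ q.2 ≤ T := fun q hq =>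
    ⟨(hcl (subset_closure hq)).1, hq.2, (hcl (subset_closure hq)).2⟩
  have hO : IsOpen (U ∩ {q : EuclideanSpace ℝ (Fin m) × ℝ | 0 ≤ q.2} ∩ {q | 0 < q.2}) :=
    isOpen_inter_pos ⟨U, hU, rfl⟩
  have hlim : Tendsto (fun q => fderiv ℝ u q) (𝓝[s] p) (𝓝 (G p)) := by
    have h1 : Tendsto G (𝓝[s] p) (𝓝 (G p)) :=
      (hG p ⟨hp, hpT.le⟩).mono_left (nhdsWithin_mono _ (subset_closure.trans hcl))
    refine h1.congr' ?_
    filter_upwards [self_mem_nhdsWithin] with q hq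
    exact (hGu q (hsmem q hq).1 (hsmem q hq).2.1 (hsmem q hq).2.2).symm
  have key := hasFDerivWithinAt_closure_of_tendsto_fderiv (f := u) (s := s)
    (fun q hq => (hu_smooth.differentiableAt_of_isOpen hO
      ⟨(hsmem q hq).1, (hsmem q hq).2.1⟩).differentiableWithinAt)
    ((convex_ball p δ).inter (convex_halfSpace_gt (LinearMap.snd ℝ _ ℝ).isLinear 0)) hso
    (fun q hq => (hu_cont q (hcl hq).1).mono fun y hy => (hcl (subset_closure hy)).1) hlim
  exact key.mono_of_mem_nhdsWithin hnhds

theorem gradFn_eq_of_hasFDerivWithinAt {Ω : Set (EuclideanSpace ℝ (Fin m) × ℝ)}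
    (hΩ : ∃ U, IsOpen U ∧ Ω = U ∩ {p | 0 ≤ p.2}) {p : EuclideanSpace ℝ (Fin m) × ℝ} (hp : p ∈ Ω)
    {L : (EuclideanSpace ℝ (Fin m) × ℝ) →L[ℝ] ℝ} (h : HasFDerivWithinAt u L Ω p) :
    gradFn u p.1 p.2
      = Real.sqrt (1 + ‖L.comp (ContinuousLinearMap.inl ℝ (EuclideanSpace ℝ (Fin m)) ℝ)‖ ^ 2) := by
  obtain ⟨x, t⟩ := p
  obtain ⟨U, hU, rfl⟩ := hΩ
  have hmem : (fun y => (y, t)) ⁻¹' U ∈ 𝓝 x := by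
    have : ContinuousAt (fun y : EuclideanSpace ℝ (Fin m) => (y, t)) x := by fun_prop
    exact this.preimage_mem_nhds (hU.mem_nhds hp.1)
  have h1 : HasFDerivAt (fun y => u (y, t)) (L.comp (ContinuousLinearMap.inl ℝ _ ℝ)) x :=
    (h.comp (t := U ∩ {p | 0 ≤ p.2}) (f := fun y => (y, t)) x
      (hasFDerivAt_prodMk_left x t).hasFDerivWithinAt (fun y hy => ⟨hy, hp.2⟩)).hasFDerivAt hmem
  simp only [gradFn, spatialGrad, gradient, h1.fderiv, LinearIsometryEquiv.norm_map]

theorem exists_gradFn_bound {Ω : Set (EuclideanSpace ℝ (Fin m) × ℝ)}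
    (hΩ : ∃ U, IsOpen U ∧ Ω = U ∩ {p | 0 ≤ p.2}) (hu_cont : ContinuousOn u Ω)
    (hu_smooth : ContDiffOn ℝ (⊤ : ℕ∞) u (Ω ∩ {p | 0 < p.2})) {T : ℝ}
    (hbd : ∃ C : ℝ, ∀ p ∈ Ω ∩ {p : EuclideanSpace ℝ (Fin m) × ℝ | p.2 ≤ T},
      ‖iteratedFDerivWithin ℝ 1 u Ω p‖ ≤ C)
    (hext : ContinuousOn (fun p => iteratedFDerivWithin ℝ 1 u Ω p) (Ω ∩ {p | p.2 ≤ T})) :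
    ContinuousOn (fun p => gradFn u p.1 p.2) (Ω ∩ {p | p.2 < T}) ∧
      ∃ K : ℝ, ∀ p ∈ Ω ∩ {p | p.2 < T}, gradFn u p.1 p.2 ≤ K := by
  obtain ⟨C, hC⟩ := hbd
  set J := continuousMultilinearCurryFin1 ℝ (EuclideanSpace ℝ (Fin m) × ℝ) ℝ
  set G : EuclideanSpace ℝ (Fin m) × ℝ → (EuclideanSpace ℝ (Fin m) × ℝ) →L[ℝ] ℝ :=
    fun p => J (iteratedFDerivWithin ℝ 1 u Ω p) with hG
  have hGc : ContinuousOn G (Ω ∩ {p | p.2 ≤ T}) := J.continuous.comp_continuousOn hext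
  have hGu : ∀ p ∈ Ω, 0 < p.2 → p.2 ≤ T → fderiv ℝ u p = G p := by
    intro p hp h0 _
    have hn : Ω ∈ 𝓝 p := by
      obtain ⟨U, hU, rfl⟩ := hΩ
      exact inter_mem (hU.mem_nhds hp.1)
        (mem_of_superset ((isOpen_lt continuous_const continuous_snd).mem_nhds h0)
          fun q (hq : 0 < q.2) => hq.le)
    refine ContinuousLinearMap.ext fun d => ?_
    simp only [hG, J, continuousMultilinearCurryFin1_apply]
    rw [iteratedFDerivWithin_one_apply (uniqueDiffWithinAt_of_mem_nhds hn), fderivWithin_of_mem_nhds hn]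
    rfl
  have hgrad : ∀ p ∈ Ω ∩ {p | p.2 < T}, gradFn u p.1 p.2 = Real.sqrt
      (1 + ‖(G p).comp (ContinuousLinearMap.inl ℝ (EuclideanSpace ℝ (Fin m)) ℝ)‖ ^ 2) :=
    fun p hp => gradFn_eq_of_hasFDerivWithinAt hΩ hp.1
      (hasFDerivWithinAt_of_continuousOn_extension hΩ hu_cont hu_smooth hGc hGu hp.1 hp.2)
  have hsub : Ω ∩ {p | p.2 < T} ⊆ Ω ∩ {p | p.2 ≤ T} := fun p hp => ⟨hp.1, hp.2.out.le⟩
  refine ⟨?_, Real.sqrt (1 +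
    (C * ‖ContinuousLinearMap.inl ℝ (EuclideanSpace ℝ (Fin m)) ℝ‖) ^ 2), fun p hp => ?_⟩
  · refine ContinuousOn.congr ?_ hgrad
    exact (continuousOn_const.add
      (((hGc.mono hsub).clm_comp continuousOn_const).norm.pow 2)).sqrt
  · rw [hgrad p hp]
    have h1 : ‖G p‖ ≤ C := by
      simp only [hG, LinearIsometryEquiv.norm_map]
      exact hC p (hsub hp)
    gcongr
    exact (ContinuousLinearMap.opNorm_comp_le _ _).trans (by gcongr)

end Graph

/-- **C¹-estimate.**  Under the a priori estimate assumption, at points where `u < 0`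
one has `v u² ≤ sup_{t=0, {u<0}} v u²`, where `v = √(1+|Du|²)`. -/
theorem mcf_C1_estimate (n : ℕ) (hn : 1 ≤ n)
    (Ω : Set (EuclideanSpace ℝ (Fin (n + 1)) × ℝ))
    (u : EuclideanSpace ℝ (Fin (n + 1)) × ℝ → ℝ)
    -- Ω is relatively open in ℝ^{n+1} × [0,∞)
    (hΩ : ∃ U, IsOpen U ∧ Ω = U ∩ {p | 0 ≤ p.2})
    -- u is a smooth solution of graphical mean curvature flow on Ω ∩ (ℝ^{n+1} × (0,∞))
    (hu_cont : ContinuousOn u Ω)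
    (hu_smooth : ContDiffOn ℝ (⊤ : ℕ∞) u (Ω ∩ {p | 0 < p.2}))
    (hu_eq : ∀ p ∈ Ω, 0 < p.2 → mcfEqAt u p.1 p.2)
    -- u(x,t) → 0 as (x,t) approaches the relative boundary of Ω
    (hu_zero : ∀ p : EuclideanSpace ℝ (Fin (n + 1)) × ℝ,
      0 ≤ p.2 → p ∈ closure Ω → p ∉ Ω → Tendsto u (𝓝[Ω] p) (𝓝 0))
    -- all derivatives of u are uniformly bounded on Ω ∩ (ℝ^{n+1} × [0,T]) ...
    (hu_deriv_bd : ∀ T > (0 : ℝ), ∀ k : ℕ, ∃ C : ℝ,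
      ∀ p ∈ Ω ∩ {p : EuclideanSpace ℝ (Fin (n + 1)) × ℝ | p.2 ≤ T},
        ‖iteratedFDerivWithin ℝ k u Ω p‖ ≤ C)
    -- ... and extend continuously across the boundary of these sets
    (hu_deriv_ext : ∀ T > (0 : ℝ), ∀ k : ℕ,
      ∃ g : EuclideanSpace ℝ (Fin (n + 1)) × ℝ →
        (EuclideanSpace ℝ (Fin (n + 1)) × ℝ) [×k]→L[ℝ] ℝ,
        ContinuousOn g (closure (Ω ∩ {p | p.2 ≤ T})) ∧
        ∀ p ∈ Ω ∩ {p : EuclideanSpace ℝ (Fin (n + 1)) × ℝ | p.2 ≤ T},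
          g p = iteratedFDerivWithin ℝ k u Ω p)
    -- the sets Ω ∩ (ℝ^{n+1} × [0,T]) are bounded
    (hΩ_bdd : ∀ T > (0 : ℝ),
      Bornology.IsBounded (Ω ∩ {p : EuclideanSpace ℝ (Fin (n + 1)) × ℝ | p.2 ≤ T})) :
    ∀ p ∈ Ω, u p < 0 →
      gradFn u p.1 p.2 * (u p) ^ 2 ≤
        sSup {r : ℝ | ∃ y, (y, (0 : ℝ)) ∈ Ω ∧ u (y, 0) < 0 ∧
          r = gradFn u y 0 * (u (y, 0)) ^ 2} := by
  intro p₁ hp₁ hup₁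
  set A := {r : ℝ | ∃ y, (y, (0 : ℝ)) ∈ Ω ∧ u (y, 0) < 0 ∧ r = gradFn u y 0 * (u (y, 0)) ^ 2} with hA
  have hgrad_nonneg : ∀ p : EuclideanSpace ℝ (Fin (n + 1)) × ℝ, 0 ≤ gradFn u p.1 p.2 :=
    fun p => Real.sqrt_nonneg _
  have hΩ0 : ∀ p ∈ Ω, 0 ≤ p.2 := by
    obtain ⟨U, -, rfl⟩ := hΩ
    exact fun p hp => hp.2
  have hT₁ : 0 ≤ p₁.2 := hΩ0 p₁ hp₁
  have hT : 0 < p₁.2 + 1 := by linarith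
  obtain ⟨hgc, K, hK⟩ := exists_gradFn_bound hΩ hu_cont hu_smooth (hu_deriv_bd _ hT 1) (by
    obtain ⟨g, hg, hgu⟩ := hu_deriv_ext _ hT 1
    exact (hg.mono subset_closure).congr fun p hp => (hgu p hp).symm)
  obtain ⟨C, hC⟩ := hu_deriv_bd _ hT 0
  set w : EuclideanSpace ℝ (Fin (n + 1)) × ℝ → ℝ := fun p => gradFn u p.1 p.2 * u p ^ 2 with hw
  have hwc : ContinuousOn w (Ω ∩ {p | p.2 < p₁.2 + 1}) :=
    hgc.mul ((hu_cont.mono inter_subset_left).pow 2)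
  have hAbdd : BddAbove A := by
    refine ⟨K * C ^ 2, ?_⟩
    rintro r ⟨y, hy, -, rfl⟩
    have h1 := hK (y, 0) ⟨hy, hT⟩
    have h2 := hC (y, 0) ⟨hy, hT.le⟩
    rw [norm_iteratedFDerivWithin_zero, Real.norm_eq_abs] at h2
    have h3 : u (y, 0) ^ 2 ≤ C ^ 2 := by
      rw [← sq_abs]
      exact pow_le_pow_left₀ (abs_nonneg _) h2 2
    exact mul_le_mul h1 h3 (sq_nonneg _) ((hgrad_nonneg (y, 0)).trans h1)
  have hS : 0 ≤ sSup A := by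
    refine Real.sSup_nonneg ?_
    rintro r ⟨y, -, -, rfl⟩
    exact mul_nonneg (hgrad_nonneg (y, 0)) (sq_nonneg _)
  by_contra! hlt
  change sSup A < w p₁ at hlt
  set ε := (w p₁ - sSup A) / (2 * (p₁.2 + 1)) with hε
  have hεpos : 0 < ε := div_pos (by linarith) (by linarith)
  set c := w p₁ - ε * p₁.2 with hc
  have hcS : sSup A < c := by
    have h1 : ε * (2 * (p₁.2 + 1)) = w p₁ - sSup A := by
      rw [hε]; field_simp
    nlinarith
  set B := {p | p ∈ Ω ∧ p.2 ≤ p₁.2 ∧ u p ≤ 0 ∧ c ≤ w p - ε * p.2} with hB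
  have hBsub : B ⊆ Ω ∩ {p | p.2 < p₁.2 + 1} := fun p hp =>
    ⟨hp.1, lt_of_le_of_lt hp.2.1 (lt_add_one _)⟩
  have hBw : ∀ p ∈ B, c ≤ w p := fun p hp => by
    have := mul_nonneg hεpos.le (hΩ0 p hp.1)
    linarith [hp.2.2.2]
  have hBcomp : IsCompact B := by
    refine Metric.isCompact_of_isClosed_isBounded (isClosed_of_closure_subset fun q hq => ?_)
      ((hΩ_bdd _ hT).subset (hBsub.trans fun p hp => ⟨hp.1, hp.2.out.le⟩))
    obtain ⟨x, hxB, hxq⟩ := mem_closure_iff_seq_limit.1 hq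
    have hx2 : Tendsto (fun k => (x k).2) atTop (𝓝 q.2) :=
      (continuous_snd.tendsto q).comp hxq
    have hq0 : 0 ≤ q.2 := ge_of_tendsto' hx2 fun k => hΩ0 _ (hxB k).1
    have hqT : q.2 ≤ p₁.2 := le_of_tendsto' hx2 fun k => (hxB k).2.1
    have hxΩ : Tendsto x atTop (𝓝[Ω] q) :=
      tendsto_nhdsWithin_iff.2 ⟨hxq, Eventually.of_forall fun k => (hxB k).1⟩
    by_cases hqΩ : q ∈ Ω
    · have hux : Tendsto (fun k => u (x k)) atTop (𝓝 (u q)) := (hu_cont q hqΩ).tendsto.comp hxΩ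
      have hwx : Tendsto (fun k => w (x k)) atTop (𝓝 (w q)) :=
        (hwc q ⟨hqΩ, lt_of_le_of_lt hqT (lt_add_one _)⟩).tendsto.comp
          (tendsto_nhdsWithin_iff.2 ⟨hxq, Eventually.of_forall fun k => hBsub (hxB k)⟩)
      exact ⟨hqΩ, hqT, le_of_tendsto' hux fun k => (hxB k).2.2.1,
        ge_of_tendsto' (hwx.sub (hx2.const_mul ε)) fun k => (hxB k).2.2.2⟩
    · exfalso
      have hux : Tendsto (fun k => u (x k)) atTop (𝓝 0) :=
        (hu_zero q hq0 (closure_mono (fun p hp => hp.1) hq) hqΩ).comp hxΩ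
      have h0 : Tendsto (fun k => K * u (x k) ^ 2) atTop (𝓝 0) := by
        simpa using (hux.pow 2).const_mul K
      have : c ≤ 0 := ge_of_tendsto' h0 fun k => (hBw _ (hxB k)).trans
        (mul_le_mul_of_nonneg_right (hK _ (hBsub (hxB k))) (sq_nonneg _))
      linarith
  have hp₁B : p₁ ∈ B := ⟨hp₁, le_rfl, hup₁.le, le_rfl⟩
  obtain ⟨p₀, hp₀, hmax⟩ := hBcomp.exists_isMaxOn ⟨p₁, hp₁B⟩
    ((hwc.mono hBsub).sub (continuousOn_const.mul continuous_snd.continuousOn) :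
      ContinuousOn (fun p => w p - ε * p.2) B)
  have hup₀ : u p₀ < 0 := by
    refine lt_of_le_of_ne hp₀.2.2.1 fun h => ?_
    have := hBw p₀ hp₀
    simp only [hw, h] at this
    norm_num at this
    linarith
  have ht₀ : 0 < p₀.2 := by
    refine lt_of_le_of_ne (hΩ0 _ hp₀.1) fun h => ?_
    have h1 : p₀ = (p₀.1, 0) := Prod.ext rfl h.symm
    have h2 : w p₀ ∈ A := by
      refine ⟨p₀.1, h1 ▸ hp₀.1, h1 ▸ hup₀, ?_⟩
      simp only [hw]
      rw [← h1, ← h]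
    linarith [le_csSup hAbdd h2, hBw p₀ hp₀]
  have hO : IsOpen (Ω ∩ {p | 0 < p.2}) := isOpen_inter_pos hΩ
  have hp₀O : p₀ ∈ Ω ∩ {p | 0 < p.2} := ⟨hp₀.1, ht₀⟩
  refine mcf_no_backward_local_max hO hu_smooth (fun p hp => hu_eq p hp.1 hp.2) hp₀O hεpos ?_
  have hneg : ∀ᶠ q in 𝓝 p₀, u q < 0 :=
    (hu_smooth.differentiableAt_of_isOpen hO hp₀O).continuousAt.eventually (gt_mem_nhds hup₀)
  filter_upwards [hneg, hO.mem_nhds hp₀O] with q hq hqO hqt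
  change w q - ε * q.2 ≤ w p₀ - ε * p₀.2
  by_cases h : c ≤ w q - ε * q.2
  · exact hmax (show q ∈ B from ⟨hqO.1, hqt.trans hp₀.2.1, hq.le, h⟩)
  · exact (not_le.1 h).le.trans hp₀.2.2.2
end
end

section
/- Let u satisfy the a priori estimate assumption on Ω̂ ⊂ ℝ^{n+1} × [0,∞), and set v := √(1+|Du|²). Then at every point (x,t) ∈ Ω̂ with u(x,t) ≤ −1 one has v(x,t) ≤ sup { v(y,0)·u(y,0)² : y with (y,0) ∈ Ω̂ and u(y,0) < 0 }. -/
open Set Filter Topology Metric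

noncomputable section

section Helpers

variable {m : ℕ}

theorem sum_coord_mul_apply_single (L : EuclideanSpace ℝ (Fin m) →L[ℝ] ℝ)
    (ξ : EuclideanSpace ℝ (Fin m)) : ∑ i, ξ i * L (EuclideanSpace.single i 1) = L ξ := by
  have hsum : ξ = ∑ i, ξ i • EuclideanSpace.single i (1 : ℝ) := by
    ext j
    simp [Finset.sum_apply, Pi.single_apply]
  conv_rhs => rw [hsum]
  simp only [map_sum, map_smul, smul_eq_mul]

theorem trace_le_apply_self_of_nonpos
    (M : EuclideanSpace ℝ (Fin m) →L[ℝ] EuclideanSpace ℝ (Fin m) →L[ℝ] ℝ)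
    (hM : ∀ ξ, M ξ ξ ≤ 0) (e : EuclideanSpace ℝ (Fin m)) (he : ‖e‖ = 1) :
    ∑ i, M (EuclideanSpace.single i 1) (EuclideanSpace.single i 1) ≤ M e e := by
  have hsq : ∑ i, e i ^ 2 = 1 := by
    rw [← EuclideanSpace.real_norm_sq_eq, he, one_pow]
  have h1 : ∑ i, e i * M (EuclideanSpace.single i 1) e = M e e :=
    sum_coord_mul_apply_single (M.flip e) e
  have h2 : ∑ i, e i * M e (EuclideanSpace.single i 1) = M e e :=
    sum_coord_mul_apply_single (M e) e
  have key : ∑ i, M (EuclideanSpace.single i 1 - e i • e) (EuclideanSpace.single i 1 - e i • e)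
      ≤ 0 := Finset.sum_nonpos fun i _ => hM _
  have hexp : ∀ i, M (EuclideanSpace.single i 1 - e i • e) (EuclideanSpace.single i 1 - e i • e)
      = M (EuclideanSpace.single i 1) (EuclideanSpace.single i 1)
        - e i * M (EuclideanSpace.single i 1) e - e i * M e (EuclideanSpace.single i 1)
        + e i ^ 2 * M e e := by
    intro i
    simp
    ring
  simp only [hexp, Finset.sum_add_distrib, Finset.sum_sub_distrib, ← Finset.sum_mul, h1, h2, hsq]
    at key
  linarith

theorem second_deriv_nonpos_of_isLocalMax {f f' : ℝ → ℝ} {a c : ℝ} (hmax : IsLocalMax f a)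
    (hf : ∀ᶠ s in 𝓝 a, HasDerivAt f (f' s) s) (hf' : HasDerivAt f' c a) : c ≤ 0 := by
  by_contra! hc
  have hd : deriv f =ᶠ[𝓝 a] f' := hf.mono fun s hs => hs.deriv
  have hdd : deriv (deriv f) a = c := by rw [hd.deriv_eq]; exact hf'.deriv
  have hmin : IsLocalMin f a := isLocalMin_of_deriv_deriv_pos (by rw [hdd]; exact hc)
    hmax.deriv_eq_zero hf.self_of_nhds.continuousAt
  have hconst : f =ᶠ[𝓝 a] fun _ => f a := by
    filter_upwards [hmax, hmin] with s h1 h2 using le_antisymm h1 h2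
  have : deriv f =ᶠ[𝓝 a] fun _ => 0 := by
    have := hconst.deriv
    simpa using this
  rw [this.deriv_eq] at hdd
  simp at hdd
  linarith

/-- The algebraic core of the maximum principle for `(1+|Du|²) u⁴`. -/
theorem mcf_max_point_absurd {r s w h Z L K : ℝ} (hs : s = 1 + r ^ 2) (hZ : 0 ≤ Z)
    (hw : w ≠ 0) (h1 : 2 * r * h * w ^ 4 + 4 * s * w ^ 3 * r = 0)
    (h2 : 2 * r * Z * w ^ 4 + 4 * s * w ^ 3 * (r * h) = 0)
    (hspace : 2 * w ^ 4 * (Z - s⁻¹ * (r ^ 2 * h ^ 2)) + 2 * r * w ^ 4 * L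
      + 16 * r * w ^ 3 * (r * h - s⁻¹ * (r ^ 2 * (r * h)))
      + 12 * s * w ^ 2 * (r ^ 2 - s⁻¹ * r ^ 4) + 4 * s * w ^ 3 * K ≤ 0)
    (htime : 0 < 2 * r * w ^ 4 * (L + 2 * (s⁻¹) ^ 2 * (r * h) * (r ^ 2 * h) - 2 * s⁻¹ * (r * Z))
      + 4 * s * w ^ 3 * K) : False := by
  have hs0 : 0 < s := by rw [hs]; positivity
  by_cases hr : r = 0
  · subst hr
    have : 0 ≤ w ^ 4 * Z := by positivity
    nlinarith
  have e1 : h = -2 * s / w := by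
    have : 2 * r * w ^ 3 * (h * w + 2 * s) = 0 := by linear_combination h1
    have : h * w + 2 * s = 0 := by
      rcases mul_eq_zero.1 this with h | h
      · exact absurd h (by positivity)
      · exact h
    field_simp
    linarith
  have e2 : Z = 4 * s ^ 2 / w ^ 2 := by
    have : 2 * r * w ^ 3 * (Z * w + 2 * s * h) = 0 := by linear_combination h2
    have : Z * w + 2 * s * h = 0 := by
      rcases mul_eq_zero.1 this with h | h
      · exact absurd h (by positivity)
      · exact h
    rw [e1] at this
    field_simp at this ⊢
    linarith
  have key : (2 * r * w ^ 4 * (L + 2 * (s⁻¹) ^ 2 * (r * h) * (r ^ 2 * h) - 2 * s⁻¹ * (r * Z))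
      + 4 * s * w ^ 3 * K) - (2 * w ^ 4 * (Z - s⁻¹ * (r ^ 2 * h ^ 2)) + 2 * r * w ^ 4 * L
      + 16 * r * w ^ 3 * (r * h - s⁻¹ * (r ^ 2 * (r * h)))
      + 12 * s * w ^ 2 * (r ^ 2 - s⁻¹ * r ^ 4) + 4 * s * w ^ 3 * K) =
      -(4 * r ^ 2 + 8) * w ^ 2 := by
    rw [e1, e2]
    field_simp
    rw [hs]
    ring
  nlinarith [sq_nonneg r, sq_nonneg w, mul_nonneg (sq_nonneg r) (sq_nonneg w)]

/-- The spatial part of a covector on space-time, as a vector. -/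
def spatialVec : (EuclideanSpace ℝ (Fin m) × ℝ →L[ℝ] ℝ) →L[ℝ] EuclideanSpace ℝ (Fin m) :=
  ∑ i, (ContinuousLinearMap.apply ℝ ℝ
    ((EuclideanSpace.single i (1 : ℝ), 0) : EuclideanSpace ℝ (Fin m) × ℝ)).smulRight
      (EuclideanSpace.single i (1 : ℝ))

theorem spatialVec_apply (L : EuclideanSpace ℝ (Fin m) × ℝ →L[ℝ] ℝ) (i : Fin m) :
    spatialVec L i = L (EuclideanSpace.single i 1, 0) := by
  simp [spatialVec, Finset.sum_apply, Pi.single_apply]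

theorem inner_spatialVec (L : EuclideanSpace ℝ (Fin m) × ℝ →L[ℝ] ℝ)
    (ξ : EuclideanSpace ℝ (Fin m)) : inner ℝ (spatialVec L) ξ = L (ξ, 0) := by
  have : L (ξ, 0) = (L.comp (ContinuousLinearMap.inl ℝ _ ℝ)) ξ := by simp
  rw [this, ← sum_coord_mul_apply_single]
  simp [PiLp.inner_apply, spatialVec_apply]

theorem spatialGrad_eq {u : EuclideanSpace ℝ (Fin m) × ℝ → ℝ} {x : EuclideanSpace ℝ (Fin m)}
    {t : ℝ} {L : EuclideanSpace ℝ (Fin m) × ℝ →L[ℝ] ℝ}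
    (h : HasFDerivAt (fun y => u (y, t)) (L.comp (ContinuousLinearMap.inl ℝ _ ℝ)) x) :
    spatialGrad u x t = spatialVec L := by
  refine ext_inner_right ℝ fun ξ => ?_
  rw [inner_spatialVec, spatialGrad, gradient, InnerProductSpace.toDual_symm_apply, h.fderiv]
  simp

theorem spatialGrad_eq_of_hasFDerivAt {u : EuclideanSpace ℝ (Fin m) × ℝ → ℝ}
    {x : EuclideanSpace ℝ (Fin m)} {t : ℝ} (h : DifferentiableAt ℝ u (x, t)) :
    spatialGrad u x t = spatialVec (fderiv ℝ u (x, t)) :=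
  spatialGrad_eq (h.hasFDerivAt.comp x (hasFDerivAt_prodMk_left x t))

theorem deriv_nonneg_of_eventually_le_left {f : ℝ → ℝ} {a c : ℝ} (hf : HasDerivAt f c a)
    (h : ∀ᶠ s in 𝓝 a, s ≤ a → f s ≤ f a) : 0 ≤ c := by
  have h1 : Tendsto (slope f a) (𝓝[<] a) (𝓝 c) :=
    (hasDerivWithinAt_iff_tendsto_slope' (by simp)).1 (hf.hasDerivWithinAt (s := Iio a))
  refine ge_of_tendsto h1 ?_
  filter_upwards [nhdsWithin_le_nhds h, self_mem_nhdsWithin] with s hs hsa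
  have hsa' : s < a := hsa
  rw [slope_def_field]
  exact div_nonneg_of_nonpos (by linarith [hs hsa'.le]) (by linarith)

theorem hasDerivAt_line {E : Type*} [NormedAddCommGroup E] [NormedSpace ℝ E] (q η : E) (s : ℝ) :
    HasDerivAt (fun s : ℝ => q + s • η) η s := by
  simpa using ((hasDerivAt_id s).smul_const η).const_add q

theorem tendsto_line {E : Type*} [NormedAddCommGroup E] [NormedSpace ℝ E] (q η : E) :
    Tendsto (fun s : ℝ => q + s • η) (𝓝 0) (𝓝 q) := by
  have := (hasDerivAt_line q η 0).continuousAt.tendsto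
  simpa using this

/-- Mean curvature flow in nondivergence form. -/
theorem mcfEqAt.nondivergence_form {u : EuclideanSpace ℝ (Fin m) × ℝ → ℝ}
    {q : EuclideanSpace ℝ (Fin m) × ℝ} (hu : ∀ᶠ y in 𝓝 q, HasFDerivAt u (fderiv ℝ u y) y)
    {A : EuclideanSpace ℝ (Fin m) × ℝ →L[ℝ] EuclideanSpace ℝ (Fin m) × ℝ →L[ℝ] ℝ}
    (hA : HasFDerivAt (fderiv ℝ u) A q) (h : mcfEqAt u q.1 q.2) :
    fderiv ℝ u q (0, 1) = ∑ i, A (EuclideanSpace.single i 1, 0) (EuclideanSpace.single i 1, 0)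
      - (1 + ‖spatialVec (fderiv ℝ u q)‖ ^ 2)⁻¹ *
        A (spatialVec (fderiv ℝ u q), 0) (spatialVec (fderiv ℝ u q), 0) := by
  obtain ⟨x, t⟩ := q
  simp only at h ⊢
  set P := spatialVec (fderiv ℝ u (x, t)) with hP
  have ht : deriv (fun s => u (x, s)) t = fderiv ℝ u (x, t) (0, 1) := by
    have := (hu.self_of_nhds.comp_hasDerivAt t ((hasDerivAt_const t x).prodMk (hasDerivAt_id t)))
    exact this.deriv
  have hnear : ∀ᶠ y in 𝓝 x, spatialGrad u y t = spatialVec (fderiv ℝ u (y, t)) := by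
    have hc : Tendsto (fun y => (y, t)) (𝓝 x) (𝓝 (x, t)) := by
      exact (Continuous.prodMk_left t).tendsto x
    filter_upwards [hc.eventually hu] with y hy
    exact spatialGrad_eq_of_hasFDerivAt hy.differentiableAt
  set J := ContinuousLinearMap.inl ℝ (EuclideanSpace ℝ (Fin m)) ℝ with hJ
  have hPd : HasFDerivAt (fun y => spatialVec (fderiv ℝ u (y, t)))
      (spatialVec.comp (A.comp J)) x :=
    spatialVec.hasFDerivAt.comp x (hA.comp x (hasFDerivAt_prodMk_left x t))
  have hs0 : 0 < 1 + ‖P‖ ^ 2 := by positivity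
  have hv0 : 0 < √(1 + ‖P‖ ^ 2) := Real.sqrt_pos.2 hs0
  have hvinv : HasFDerivAt (fun y => (√(1 + ‖spatialVec (fderiv ℝ u (y, t))‖ ^ 2))⁻¹) _ x :=
    (hasDerivAt_inv hv0.ne').comp_hasFDerivAt x (((hPd.norm_sq).const_add 1).sqrt hs0.ne')
  have hX := hvinv.smul hPd
  have hXeq : (fun y => (gradFn u y t)⁻¹ • spatialGrad u y t) =ᶠ[𝓝 x]
      fun y => (√(1 + ‖spatialVec (fderiv ℝ u (y, t))‖ ^ 2))⁻¹ •
        spatialVec (fderiv ℝ u (y, t)) := by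
    filter_upwards [hnear] with y hy
    rw [gradFn, hy]
  rw [mcfEqAt, ht, gradFn, hnear.self_of_nhds, vecDiv, hXeq.fderiv_eq] at h
  erw [hX.fderiv] at h
  rw [h, ← hP, Finset.mul_sum]
  have hsum := sum_coord_mul_apply_single ((A.flip (P, 0)).comp J) P
  simp only [hJ, ContinuousLinearMap.comp_apply, ContinuousLinearMap.inl_apply,
    ContinuousLinearMap.flip_apply] at hsum
  rw [← hsum, Finset.mul_sum, ← Finset.sum_sub_distrib]
  refine Finset.sum_congr rfl fun i _ => ?_
  have hin : inner ℝ P (spatialVec (A (EuclideanSpace.single i 1, 0)))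
      = A (EuclideanSpace.single i 1, 0) (P, 0) := by
    rw [real_inner_comm, inner_spatialVec]
  have hsq : √(1 + ‖P‖ ^ 2) ^ 2 = 1 + ‖P‖ ^ 2 := Real.sq_sqrt hs0.le
  simp [hJ, spatialVec_apply, hin, hsq]
  field_simp
  ring

section Line

variable {E F : Type*} [NormedAddCommGroup E] [NormedSpace ℝ E]
  [NormedAddCommGroup F] [NormedSpace ℝ F]

theorem HasFDerivAt.hasDerivAt_line {f : E → F} {f' : E →L[ℝ] F} {q η : E} {s : ℝ}
    (h : HasFDerivAt f f' (q + s • η)) : HasDerivAt (fun s : ℝ => f (q + s • η)) (f' η) s :=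
  h.comp_hasDerivAt s (_root_.hasDerivAt_line q η s)

theorem HasFDerivAt.hasDerivAt_line_zero {f : E → F} {f' : E →L[ℝ] F} {q : E}
    (h : HasFDerivAt f f' q) (η : E) : HasDerivAt (fun s : ℝ => f (q + s • η)) (f' η) 0 :=
  HasFDerivAt.hasDerivAt_line (by simpa using h)

theorem HasDerivAt.clm_apply_const {L : ℝ → E →L[ℝ] F} {L' : E →L[ℝ] F} {s : ℝ}
    (h : HasDerivAt L L' s) (a : E) : HasDerivAt (fun s => L s a) (L' a) s := by
  simpa using h.clm_apply (hasDerivAt_const s a)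

theorem HasFDerivAt.hasDerivAt_line_bilin {A : E → E →L[ℝ] E →L[ℝ] F}
    {A' : E →L[ℝ] E →L[ℝ] E →L[ℝ] F} {q : E} (h : HasFDerivAt A A' q) (η : E) :
    HasDerivAt (fun s : ℝ => A (q + s • η)) (A' η) 0 :=
  HasFDerivAt.hasDerivAt_line_zero (F := E →L[ℝ] E →L[ℝ] F) (f := A) (f' := A') h η

theorem HasFDerivAt.hasDerivAt_line_apply₂ {A : E → E →L[ℝ] E →L[ℝ] F}
    {A' : E →L[ℝ] E →L[ℝ] E →L[ℝ] F} {q : E} (h : HasFDerivAt A A' q) (η b c : E) :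
    HasDerivAt (fun s : ℝ => A (q + s • η) b c) (A' η b c) 0 := by
  have h2 : HasDerivAt (fun s : ℝ => A (q + s • η) b) (A' η b) 0 :=
    (h.hasDerivAt_line_bilin η).clm_apply_const b
  exact h2.clm_apply_const c

theorem fderiv_apply_symm_of_eventually {A : E → E →L[ℝ] E →L[ℝ] F}
    {A' : E →L[ℝ] E →L[ℝ] E →L[ℝ] F} {q : E} (h : HasFDerivAt A A' q)
    (hsymm : ∀ᶠ y in 𝓝 q, ∀ a b, A y a b = A y b a) (a b c : E) : A' a b c = A' a c b :=
  (h.hasDerivAt_line_apply₂ a b c).unique ((h.hasDerivAt_line_apply₂ a c b).congr_of_eventuallyEq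
    (((tendsto_line q a).eventually hsymm).mono fun _ hy => hy b c))

end Line

theorem hasDerivAt_one_add_sq_mul_pow {z w : ℝ → ℝ} {z' w' σ : ℝ} (hz : HasDerivAt z z' σ)
    (hw : HasDerivAt w w' σ) : HasDerivAt (fun σ => (1 + z σ ^ 2) * w σ ^ 4)
      (2 * z σ * z' * w σ ^ 4 + 4 * (1 + z σ ^ 2) * w σ ^ 3 * w') σ := by
  refine (((hz.pow 2).const_add 1).mul (hw.pow 4)).congr_deriv ?_
  simp
  ring

theorem hasDerivAt_deriv_one_add_sq_mul_pow {z w z' w' : ℝ → ℝ} {z'' w'' σ : ℝ}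
    (hz : HasDerivAt z (z' σ) σ) (hw : HasDerivAt w (w' σ) σ)
    (hz' : HasDerivAt z' z'' σ) (hw' : HasDerivAt w' w'' σ) :
    HasDerivAt (fun σ => 2 * z σ * z' σ * w σ ^ 4 + 4 * (1 + z σ ^ 2) * w σ ^ 3 * w' σ)
      (2 * z' σ ^ 2 * w σ ^ 4 + 2 * z σ * z'' * w σ ^ 4 + 16 * z σ * z' σ * w σ ^ 3 * w' σ
        + 12 * (1 + z σ ^ 2) * w σ ^ 2 * w' σ ^ 2 + 4 * (1 + z σ ^ 2) * w σ ^ 3 * w'') σ := by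
  refine ((((hz.const_mul 2).mul hz').mul (hw.pow 4)).add
      (((((hz.pow 2).const_add 1).const_mul 4).mul (hw.pow 3)).mul hw')).congr_deriv ?_
  simp
  ring

/-- `(1+|Du|²) u⁴ - ε t` has no maximum over the past at an interior point where `u ≠ 0`. -/
theorem mcf_no_interior_max [NeZero m] {u : EuclideanSpace ℝ (Fin m) × ℝ → ℝ}
    {q : EuclideanSpace ℝ (Fin m) × ℝ} {ε : ℝ} (hu : ContDiffAt ℝ 3 u q)
    (heq : ∀ᶠ y in 𝓝 q, mcfEqAt u y.1 y.2) (hw : u q ≠ 0) (hε : 0 < ε)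
    (hmax : ∀ᶠ y in 𝓝 q, y.2 ≤ q.2 →
      (1 + ‖spatialVec (fderiv ℝ u y)‖ ^ 2) * u y ^ 4 - ε * y.2 ≤
        (1 + ‖spatialVec (fderiv ℝ u q)‖ ^ 2) * u q ^ 4 - ε * q.2) : False := by
  set A₁ := fderiv ℝ u with hA₁
  set A₂ := fderiv ℝ A₁ with hA₂
  have d1 : ∀ᶠ y in 𝓝 q, HasFDerivAt u (A₁ y) y := by
    filter_upwards [hu.eventually (by simp)] with y hy
    exact (hy.differentiableAt (by norm_num)).hasFDerivAt
  have c1 : ContDiffAt ℝ 2 A₁ q := hu.fderiv_right (by norm_num)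
  have d2 : ∀ᶠ y in 𝓝 q, HasFDerivAt A₁ (A₂ y) y := by
    filter_upwards [c1.eventually (by simp)] with y hy
    exact (hy.differentiableAt (by norm_num)).hasFDerivAt
  have c2 : ContDiffAt ℝ 1 A₂ q := c1.fderiv_right (by norm_num)
  obtain ⟨A₃, d3⟩ : ∃ A₃, HasFDerivAt A₂ A₃ q :=
    ⟨_, (c2.differentiableAt (by norm_num)).hasFDerivAt⟩
  have sym2 : ∀ᶠ y in 𝓝 q, ∀ a b, A₂ y a b = A₂ y b a := by
    filter_upwards [d1.eventually_nhds, d2] with y h1 h2 a b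
    exact second_derivative_symmetric_of_eventually h1 h2 a b
  have sym3 : ∀ a b c, A₃ a b c = A₃ b a c := fun a b c => by
    rw [second_derivative_symmetric_of_eventually d2 d3 a b]
  have sym3' : ∀ a b c, A₃ a b c = A₃ a c b := fderiv_apply_symm_of_eventually d3 sym2
  set P := spatialVec (A₁ q) with hP
  set r := ‖P‖ with hr
  set w := u q with hw_def
  set s := 1 + r ^ 2 with hs
  obtain ⟨e, he, hPe⟩ : ∃ e : EuclideanSpace ℝ (Fin m), ‖e‖ = 1 ∧ P = r • e := by
    by_cases h0 : P = 0
    · exact ⟨EuclideanSpace.single 0 1, by simp, by simp [hr, h0]⟩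
    · have : ‖P‖ ≠ 0 := norm_ne_zero_iff.2 h0
      exact ⟨r⁻¹ • P, by rw [norm_smul, norm_inv, norm_norm, inv_mul_cancel₀ this],
        by rw [smul_smul, mul_inv_cancel₀ this, one_smul]⟩
  have hz : A₁ q (e, 0) = r := by
    rw [← inner_spatialVec, ← hP, hPe, real_inner_smul_left, real_inner_self_eq_norm_sq, he]
    ring
  set ζ := spatialVec (A₂ q (e, 0)) with hζ
  have hζi : ∀ ξ, A₂ q (ξ, 0) (e, 0) = inner ℝ ζ ξ := fun ξ => by
    rw [sym2.self_of_nhds, hζ, inner_spatialVec]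
  have hu1 : ∀ ξ, A₁ q (ξ, 0) = r * inner ℝ e ξ := fun ξ => by
    rw [← inner_spatialVec, ← hP, hPe, real_inner_smul_left]
  -- reduce to the single direction `e`
  have hmaxe : ∀ᶠ y in 𝓝 q, y.2 ≤ q.2 →
      (1 + A₁ y (e, 0) ^ 2) * u y ^ 4 - ε * y.2 ≤ (1 + A₁ q (e, 0) ^ 2) * w ^ 4 - ε * q.2 := by
    filter_upwards [hmax] with y hy hyq
    refine le_trans ?_ ((hy hyq).trans (by rw [hz]))
    have : |A₁ y (e, 0)| ≤ ‖spatialVec (A₁ y)‖ := by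
      rw [← inner_spatialVec]
      simpa [he] using abs_real_inner_le_norm (spatialVec (A₁ y)) e
    have := sq_le_sq' (by linarith [neg_abs_le (A₁ y (e, 0))]) ((le_abs_self _).trans this)
    have h4 : 0 ≤ u y ^ 4 := by positivity
    nlinarith
  -- first derivative along a line
  have hline : ∀ η : EuclideanSpace ℝ (Fin m) × ℝ, ∀ᶠ σ in 𝓝 (0 : ℝ),
      HasDerivAt (fun σ : ℝ => (1 + A₁ (q + σ • η) (e, 0) ^ 2) * u (q + σ • η) ^ 4)
        (2 * A₁ (q + σ • η) (e, 0) * A₂ (q + σ • η) η (e, 0) * u (q + σ • η) ^ 4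
          + 4 * (1 + A₁ (q + σ • η) (e, 0) ^ 2) * u (q + σ • η) ^ 3 * A₁ (q + σ • η) η) σ := by
    intro η
    filter_upwards [(tendsto_line q η).eventually d1, (tendsto_line q η).eventually d2]
      with σ h1 h2
    exact hasDerivAt_one_add_sq_mul_pow (h2.hasDerivAt_line.clm_apply_const _) h1.hasDerivAt_line
  have hline2 : ∀ η : EuclideanSpace ℝ (Fin m) × ℝ,
      HasDerivAt (fun σ : ℝ =>
        2 * A₁ (q + σ • η) (e, 0) * A₂ (q + σ • η) η (e, 0) * u (q + σ • η) ^ 4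
          + 4 * (1 + A₁ (q + σ • η) (e, 0) ^ 2) * u (q + σ • η) ^ 3 * A₁ (q + σ • η) η)
        (2 * (A₂ q η (e, 0)) ^ 2 * w ^ 4 + 2 * r * A₃ η η (e, 0) * w ^ 4
          + 16 * r * A₂ q η (e, 0) * w ^ 3 * A₁ q η + 12 * s * w ^ 2 * A₁ q η ^ 2
          + 4 * s * w ^ 3 * A₂ q η η) 0 := by
    intro η
    have k1 := d1.self_of_nhds.hasDerivAt_line_zero η
    have k2 := d2.self_of_nhds.hasDerivAt_line_zero η
    have k3 := d3.hasDerivAt_line_apply₂ η η (e, 0)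
    have := hasDerivAt_deriv_one_add_sq_mul_pow (z' := fun σ => A₂ (q + σ • η) η (e, 0))
      (w' := fun σ => A₁ (q + σ • η) η) (σ := 0)
      (by simpa using k2.clm_apply_const (e, 0)) (by simpa using k1) k3 (k2.clm_apply_const η)
    simpa only [zero_smul, add_zero, hz] using this
  -- spatial maximality
  have hlocmax : ∀ ξ : EuclideanSpace ℝ (Fin m), IsLocalMax (fun σ : ℝ =>
      (1 + A₁ (q + σ • (ξ, (0 : ℝ))) (e, 0) ^ 2) * u (q + σ • (ξ, (0 : ℝ))) ^ 4) 0 := by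
    intro ξ
    filter_upwards [(tendsto_line q (ξ, (0 : ℝ))).eventually hmaxe] with σ hσ
    have := hσ (by simp)
    simp at this ⊢
    linarith
  have hgrad : ∀ ξ : EuclideanSpace ℝ (Fin m),
      2 * r * inner ℝ ζ ξ * w ^ 4 + 4 * s * w ^ 3 * (r * inner ℝ e ξ) = 0 := by
    intro ξ
    have := (hlocmax ξ).hasDerivAt_eq_zero (hline (ξ, 0)).self_of_nhds
    simpa [hz, hζi, hu1] using this
  have hhess : ∀ ξ : EuclideanSpace ℝ (Fin m),
      2 * (inner ℝ ζ ξ) ^ 2 * w ^ 4 + 2 * r * A₃ (ξ, 0) (ξ, 0) (e, 0) * w ^ 4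
          + 16 * r * inner ℝ ζ ξ * w ^ 3 * (r * inner ℝ e ξ)
          + 12 * s * w ^ 2 * (r * inner ℝ e ξ) ^ 2
          + 4 * s * w ^ 3 * A₂ q (ξ, 0) (ξ, 0) ≤ 0 := by
    intro ξ
    have := second_deriv_nonpos_of_isLocalMax (hlocmax ξ) (hline (ξ, 0)) (hline2 (ξ, 0))
    simpa only [hζi, hu1] using this
  -- time maximality
  have htime : 0 < 2 * r * A₂ q (0, 1) (e, 0) * w ^ 4 + 4 * s * w ^ 3 * A₁ q (0, 1) := by
    have h1 := ((hline (0, 1)).self_of_nhds).sub ((hasDerivAt_id (0 : ℝ)).const_mul ε)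
    have h2 := deriv_nonneg_of_eventually_le_left h1 (by
      filter_upwards [(tendsto_line q (0, 1)).eventually hmaxe] with σ hσ hσ0
      have := hσ (by simpa using hσ0)
      simp only [Pi.sub_apply, zero_smul, add_zero, id, Prod.snd_add, Prod.smul_snd, smul_eq_mul]
        at this ⊢
      linarith)
    simp only [zero_smul, add_zero, hz] at h2
    linarith
  have hs0 : 0 < s := by positivity
  -- the flow equation near `q`
  have hflow : ∀ᶠ y in 𝓝 q, A₁ y (0, 1) =
      ∑ i, A₂ y (EuclideanSpace.single i 1, 0) (EuclideanSpace.single i 1, 0)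
        - (1 + ‖spatialVec (A₁ y)‖ ^ 2)⁻¹ *
          A₂ y (spatialVec (A₁ y), 0) (spatialVec (A₁ y), 0) := by
    filter_upwards [d1.eventually_nhds, d2, heq] with y h1 h2 h3
    exact h3.nondivergence_form h1 h2
  -- the differentiated flow equation
  have hflow' : A₂ q (e, 0) (0, 1) =
      ∑ i, A₃ (e, 0) (EuclideanSpace.single i 1, 0) (EuclideanSpace.single i 1, 0)
        - (-(2 * inner ℝ P ζ) / s ^ 2 * A₂ q (P, 0) (P, 0)
          + s⁻¹ * (A₃ (e, 0) (P, 0) (P, 0) + A₂ q (ζ, 0) (P, 0) + A₂ q (P, 0) (ζ, 0))) := by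
    have k2 := d2.self_of_nhds.hasDerivAt_line_zero (e, 0)
    have hp : HasDerivAt (fun σ : ℝ => spatialVec (A₁ (q + σ • (e, (0 : ℝ))))) ζ 0 :=
      spatialVec.hasFDerivAt.comp_hasDerivAt 0 k2
    have hpp := hp.prodMk (hasDerivAt_const (0 : ℝ) (0 : ℝ))
    have k3 : HasDerivAt (fun σ : ℝ => A₂ (q + σ • (e, (0 : ℝ)))) (A₃ (e, 0)) 0 :=
      d3.hasDerivAt_line_bilin (e, 0)
    have hsum : HasDerivAt (fun σ : ℝ => ∑ i, A₂ (q + σ • (e, (0 : ℝ)))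
        (EuclideanSpace.single i 1, 0) (EuclideanSpace.single i 1, 0))
        (∑ i, A₃ (e, 0) (EuclideanSpace.single i 1, 0) (EuclideanSpace.single i 1, 0)) 0 :=
      HasDerivAt.fun_sum fun i _ => d3.hasDerivAt_line_apply₂ _ _ _
    have hinv := ((hp.norm_sq).const_add 1).fun_inv (by positivity)
    have hquad := (k3.clm_apply hpp).clm_apply hpp
    have := (hsum.sub (hinv.mul hquad)).congr_of_eventuallyEq
      ((tendsto_line q (e, (0 : ℝ))).eventually hflow)
    have := (k2.clm_apply_const (0, 1)).unique this
    simp only [zero_smul, add_zero, ← hP, ← hr, ← hs] at this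
    rw [this]
    simp
  set J := ContinuousLinearMap.inl ℝ (EuclideanSpace ℝ (Fin m)) ℝ with hJ
  set M : EuclideanSpace ℝ (Fin m) →L[ℝ] EuclideanSpace ℝ (Fin m) →L[ℝ] ℝ :=
    (2 * w ^ 4) • (innerSL ℝ ζ).smulRight (innerSL ℝ ζ)
    + (2 * r * w ^ 4) • (A₃ (e, 0)).bilinearComp J J
    + (16 * r ^ 2 * w ^ 3) • (innerSL ℝ ζ).smulRight (innerSL ℝ e)
    + (12 * s * w ^ 2 * r ^ 2) • (innerSL ℝ e).smulRight (innerSL ℝ e)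
    + (4 * s * w ^ 3) • (A₂ q).bilinearComp J J with hM
  have hMξ : ∀ ξ, M ξ ξ = 2 * w ^ 4 * (inner ℝ ζ ξ * inner ℝ ζ ξ)
      + 2 * r * w ^ 4 * A₃ (e, 0) (ξ, 0) (ξ, 0)
      + 16 * r ^ 2 * w ^ 3 * (inner ℝ ζ ξ * inner ℝ e ξ)
      + 12 * s * w ^ 2 * r ^ 2 * (inner ℝ e ξ * inner ℝ e ξ)
      + 4 * s * w ^ 3 * A₂ q (ξ, 0) (ξ, 0) := fun ξ => by
    simp [hM, hJ]
  have hMneg : ∀ ξ, M ξ ξ ≤ 0 := fun ξ => by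
    have h1 := hhess ξ
    rw [sym3', sym3] at h1
    rw [hMξ]
    linarith
  have htrace := trace_le_apply_self_of_nonpos M hMneg e he
  have hcontr : ∀ a b : EuclideanSpace ℝ (Fin m), ∑ i,
      inner ℝ a (EuclideanSpace.single i (1 : ℝ)) * inner ℝ b (EuclideanSpace.single i (1 : ℝ))
        = (inner ℝ a b : ℝ) := fun a b => by
    have := sum_coord_mul_apply_single (innerSL ℝ b) a
    rw [innerSL_apply_apply, real_inner_comm] at this
    rw [← this]
    refine Finset.sum_congr rfl fun i _ => ?_
    rw [EuclideanSpace.inner_single_right]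
    simp
  have hee : inner ℝ e e = (1 : ℝ) := by rw [real_inner_self_eq_norm_sq, he, one_pow]
  have heζ : inner ℝ e ζ = (inner ℝ ζ e : ℝ) := real_inner_comm _ _
  have hMe := hMneg e
  simp only [hMξ, Finset.sum_add_distrib, ← Finset.mul_sum, hcontr, hee] at htrace hMe
  set S₃ := ∑ i, A₃ (e, 0) (EuclideanSpace.single i 1, 0) (EuclideanSpace.single i 1, 0)
  have hflow0 := hflow.self_of_nhds
  simp only [← hP, ← hr, ← hs] at hflow0
  set S₂ := ∑ i, A₂ q (EuclideanSpace.single i 1, 0) (EuclideanSpace.single i 1, 0)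
  have hP0 : ((P, 0) : EuclideanSpace ℝ (Fin m) × ℝ) = r • (e, 0) := by simp [hPe]
  have hAζe : A₂ q (e, 0) (ζ, 0) = inner ℝ ζ ζ := by rw [sym2.self_of_nhds, hζi]
  have hPζ : inner ℝ P ζ = r * (inner ℝ ζ e : ℝ) := by
    rw [hPe, real_inner_smul_left, heζ]
  rw [hP0] at hflow' hflow0
  simp only [map_smul, _root_.smul_apply, smul_eq_mul, hAζe, hζi, hPζ]
    at hflow' hflow0 htrace hMe
  refine mcf_max_point_absurd (r := r) (s := s) (w := w) (h := inner ℝ ζ e) (Z := inner ℝ ζ ζ)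
    (L := S₃ - s⁻¹ * (r ^ 2 * A₃ (e, 0) (e, 0) (e, 0))) (K := A₁ q (0, 1)) hs
    real_inner_self_nonneg hw ?_ ?_ ?_ ?_
  · have := hgrad e
    rw [hee] at this
    linarith
  · have := hgrad ζ
    rw [heζ] at this
    exact this
  · have hr2 : r ^ 2 = s - 1 := by rw [hs]; ring
    have hs1 : s⁻¹ * s = 1 := inv_mul_cancel₀ hs0.ne'
    have := mul_nonpos_of_nonneg_of_nonpos (inv_pos.2 hs0).le hMe
    rw [hflow0]
    have hi : s⁻¹ * r ^ 2 = 1 - s⁻¹ := by rw [hr2, mul_sub, hs1, mul_one]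
    linear_combination htrace + this - (2 * w ^ 4 * (inner ℝ ζ e * inner ℝ ζ e)
      + 2 * r * w ^ 4 * A₃ (e, 0) (e, 0) (e, 0) + 16 * r ^ 2 * w ^ 3 * (inner ℝ ζ e * 1)
      + 12 * s * w ^ 2 * r ^ 2 * 1 + 4 * s * w ^ 3 * inner ℝ ζ e) * hi
  · rw [sym2.self_of_nhds, hflow'] at htime
    refine htime.trans_le (le_of_eq ?_)
    field_simp
    ring

theorem uniqueDiffOn_of_relativelyOpen {Ω : Set (EuclideanSpace ℝ (Fin m) × ℝ)}
    (hΩ : ∃ U, IsOpen U ∧ Ω = U ∩ {p | 0 ≤ p.2}) : UniqueDiffOn ℝ Ω := by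
  obtain ⟨U, hU, rfl⟩ := hΩ
  have h : UniqueDiffOn ℝ {p : EuclideanSpace ℝ (Fin m) × ℝ | 0 ≤ p.2} := by
    have : {p : EuclideanSpace ℝ (Fin m) × ℝ | 0 ≤ p.2} = univ ×ˢ Ici 0 := by ext; simp
    rw [this]
    exact uniqueDiffOn_univ.prod (uniqueDiffOn_Ici 0)
  rw [inter_comm]
  exact h.inter hU

theorem mem_nhds_of_relativelyOpen {Ω : Set (EuclideanSpace ℝ (Fin m) × ℝ)}
    (hΩ : ∃ U, IsOpen U ∧ Ω = U ∩ {p | 0 ≤ p.2}) {p : EuclideanSpace ℝ (Fin m) × ℝ} (hp : p ∈ Ω)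
    (hp0 : 0 < p.2) : Ω ∈ 𝓝 p := by
  obtain ⟨U, hU, rfl⟩ := hΩ
  refine inter_mem (hU.mem_nhds hp.1) ?_
  filter_upwards [continuous_snd.continuousAt.eventually (lt_mem_nhds hp0)] with y hy
  exact le_of_lt hy

/-- If the first derivative is continuous up to the initial time, the function is differentiable
there within the space-time domain. -/
theorem hasFDerivWithinAt_fderivWithin_of_relativelyOpen
    {Ω : Set (EuclideanSpace ℝ (Fin m) × ℝ)} {u : EuclideanSpace ℝ (Fin m) × ℝ → ℝ}
    (hΩ : ∃ U, IsOpen U ∧ Ω = U ∩ {p | 0 ≤ p.2}) (hu_cont : ContinuousOn u Ω)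
    (hu_diff : ∀ p ∈ Ω, 0 < p.2 → DifferentiableAt ℝ u p)
    (hB : ContinuousOn (fderivWithin ℝ u Ω) Ω) {p : EuclideanSpace ℝ (Fin m) × ℝ} (hp : p ∈ Ω) :
    HasFDerivWithinAt u (fderivWithin ℝ u Ω p) Ω p := by
  have hnhds := fun q (hq : q ∈ Ω) => mem_nhds_of_relativelyOpen hΩ hq
  obtain ⟨U, hU, hΩU⟩ := hΩ
  by_cases hp0 : 0 < p.2
  · exact (hu_diff p hp hp0).differentiableWithinAt.hasFDerivWithinAt
  obtain ⟨ρ, hρ, hball⟩ := Metric.nhds_basis_closedBall.mem_iff.1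
    (hU.mem_nhds (hΩU ▸ hp : p ∈ U ∩ _).1)
  set H : Set (EuclideanSpace ℝ (Fin m) × ℝ) := univ ×ˢ Ioi 0 with hH
  have hHo : IsOpen H := isOpen_univ.prod isOpen_Ioi
  have hHc : closure H = univ ×ˢ Ici 0 := by rw [hH, closure_prod_eq, closure_univ, closure_Ioi]
  set s := ball p ρ ∩ H with hs
  have hcl : closure s ⊆ Ω := by
    intro y hy
    rw [hΩU]
    refine ⟨hball (closure_ball_subset_closedBall (closure_mono inter_subset_left hy)), ?_⟩
    have : y ∈ closure H := closure_mono inter_subset_right hy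
    rw [hHc] at this
    exact this.2
  have hsΩ : s ⊆ Ω := subset_closure.trans hcl
  have key : HasFDerivWithinAt u (fderivWithin ℝ u Ω p) (closure s) p := by
    refine hasFDerivWithinAt_closure_of_tendsto_fderiv
      (fun y hy => (hu_diff y (hsΩ hy) hy.2.2).differentiableWithinAt)
      ((convex_ball p ρ).inter (convex_univ.prod (convex_Ioi 0))) (isOpen_ball.inter hHo)
      (fun y hy => (hu_cont y (hcl hy)).mono hsΩ) ?_
    refine ((hB p hp).mono hsΩ).tendsto.congr' ?_
    filter_upwards [self_mem_nhdsWithin] with y hy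
    exact fderivWithin_of_mem_nhds (hnhds y (hsΩ hy) hy.2.2)
  refine key.mono_of_mem_nhdsWithin ?_
  have : Ω ∩ ball p ρ ∈ 𝓝[Ω] p :=
    inter_mem self_mem_nhdsWithin (mem_nhdsWithin_of_mem_nhds (ball_mem_nhds p hρ))
  refine mem_of_superset this fun y hy => isOpen_ball.inter_closure ⟨hy.2, ?_⟩
  rw [hHc]
  exact ⟨trivial, (hΩU ▸ hy.1 : y ∈ U ∩ _).2⟩

theorem spatialGrad_eq_spatialVec_fderivWithin {Ω : Set (EuclideanSpace ℝ (Fin m) × ℝ)}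
    {u : EuclideanSpace ℝ (Fin m) × ℝ → ℝ}
    (hΩ : ∃ U, IsOpen U ∧ Ω = U ∩ {p | 0 ≤ p.2}) {p : EuclideanSpace ℝ (Fin m) × ℝ} (hp : p ∈ Ω)
    (h : HasFDerivWithinAt u (fderivWithin ℝ u Ω p) Ω p) :
    spatialGrad u p.1 p.2 = spatialVec (fderivWithin ℝ u Ω p) := by
  obtain ⟨U, hU, hΩU⟩ := hΩ
  refine spatialGrad_eq (h.comp_hasFDerivAt p.1 (hasFDerivAt_prodMk_left p.1 p.2) ?_)
  have hc : Tendsto (fun y => (y, p.2)) (𝓝 p.1) (𝓝 p) := (Continuous.prodMk_left p.2).tendsto p.1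
  rw [hΩU] at hp ⊢
  filter_upwards [hc.eventually (hU.mem_nhds hp.1)] with y hy using ⟨hy, hp.2⟩

/-- Sublevel sets `{u ≤ -δ, t ≤ T}` are compact. -/
theorem isCompact_sublevel_of_tendsto_zero {Ω : Set (EuclideanSpace ℝ (Fin m) × ℝ)}
    {u : EuclideanSpace ℝ (Fin m) × ℝ → ℝ} (hΩ : ∀ p ∈ Ω, 0 ≤ p.2) (hu_cont : ContinuousOn u Ω)
    (hu_zero : ∀ p : EuclideanSpace ℝ (Fin m) × ℝ,
      0 ≤ p.2 → p ∈ closure Ω → p ∉ Ω → Tendsto u (𝓝[Ω] p) (𝓝 0)) {T δ : ℝ} (hδ : 0 < δ)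
    (hbdd : Bornology.IsBounded (Ω ∩ {p : EuclideanSpace ℝ (Fin m) × ℝ | p.2 ≤ T})) :
    IsCompact {p | p ∈ Ω ∧ p.2 ≤ T ∧ u p ≤ -δ} := by
  set K := {p | p ∈ Ω ∧ p.2 ≤ T ∧ u p ≤ -δ} with hK
  refine Metric.isCompact_of_isClosed_isBounded ?_ (hbdd.subset fun p hp => ⟨hp.1, hp.2.1⟩)
  have hKΩ : K ⊆ Ω := fun p hp => hp.1
  refine isClosed_of_closure_subset fun p hp => ?_
  have hp0 : 0 ≤ p.2 :=
    closure_minimal (fun y (hy : y ∈ K) => hΩ y hy.1)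
      (isClosed_le continuous_const continuous_snd) hp
  have hpT : p.2 ≤ T :=
    closure_minimal (fun y (hy : y ∈ K) => hy.2.1)
      (isClosed_le continuous_snd continuous_const) hp
  have : (𝓝[K] p).NeBot := mem_closure_iff_nhdsWithin_neBot.1 hp
  have hle : ∀ᶠ y in 𝓝[K] p, u y ≤ -δ := by
    filter_upwards [self_mem_nhdsWithin] with y hy using hy.2.2
  by_cases hpΩ : p ∈ Ω
  · exact ⟨hpΩ, hpT, le_of_tendsto ((hu_cont p hpΩ).mono hKΩ).tendsto hle⟩
  · have := le_of_tendsto ((hu_zero p hp0 (closure_mono hKΩ hp) hpΩ).mono_left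
      (nhdsWithin_mono p hKΩ)) hle
    linarith

end Helpers

/-- **C¹-estimate, corollary.**  Under the a priori estimate assumption, at points where
`u ≤ -1` one has `v ≤ sup_{t=0, {u<0}} v u²`, where `v = √(1+|Du|²)`. -/
theorem mcf_gradient_bound (n : ℕ) (hn : 1 ≤ n)
    (Ω : Set (EuclideanSpace ℝ (Fin (n + 1)) × ℝ))
    (u : EuclideanSpace ℝ (Fin (n + 1)) × ℝ → ℝ)
    -- Ω is relatively open in ℝ^{n+1} × [0,∞)
    (hΩ : ∃ U, IsOpen U ∧ Ω = U ∩ {p | 0 ≤ p.2})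
    -- u is a smooth solution of graphical mean curvature flow on Ω ∩ (ℝ^{n+1} × (0,∞))
    (hu_cont : ContinuousOn u Ω)
    (hu_smooth : ContDiffOn ℝ (⊤ : ℕ∞) u (Ω ∩ {p | 0 < p.2}))
    (hu_eq : ∀ p ∈ Ω, 0 < p.2 → mcfEqAt u p.1 p.2)
    -- u(x,t) → 0 as (x,t) approaches the relative boundary of Ω
    (hu_zero : ∀ p : EuclideanSpace ℝ (Fin (n + 1)) × ℝ,
      0 ≤ p.2 → p ∈ closure Ω → p ∉ Ω → Tendsto u (𝓝[Ω] p) (𝓝 0))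
    -- all derivatives of u are uniformly bounded on Ω ∩ (ℝ^{n+1} × [0,T]) ...
    (hu_deriv_bd : ∀ T > (0 : ℝ), ∀ k : ℕ, ∃ C : ℝ,
      ∀ p ∈ Ω ∩ {p : EuclideanSpace ℝ (Fin (n + 1)) × ℝ | p.2 ≤ T},
        ‖iteratedFDerivWithin ℝ k u Ω p‖ ≤ C)
    -- ... and extend continuously across the boundary of these sets
    (hu_deriv_ext : ∀ T > (0 : ℝ), ∀ k : ℕ,
      ∃ g : EuclideanSpace ℝ (Fin (n + 1)) × ℝ →
        (EuclideanSpace ℝ (Fin (n + 1)) × ℝ) [×k]→L[ℝ] ℝ,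
        ContinuousOn g (closure (Ω ∩ {p | p.2 ≤ T})) ∧
        ∀ p ∈ Ω ∩ {p : EuclideanSpace ℝ (Fin (n + 1)) × ℝ | p.2 ≤ T},
          g p = iteratedFDerivWithin ℝ k u Ω p)
    -- the sets Ω ∩ (ℝ^{n+1} × [0,T]) are bounded
    (hΩ_bdd : ∀ T > (0 : ℝ),
      Bornology.IsBounded (Ω ∩ {p : EuclideanSpace ℝ (Fin (n + 1)) × ℝ | p.2 ≤ T})) :
    ∀ p ∈ Ω, u p ≤ -1 →
      gradFn u p.1 p.2 ≤
        sSup {r : ℝ | ∃ y, (y, (0 : ℝ)) ∈ Ω ∧ u (y, 0) < 0 ∧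
          r = gradFn u y 0 * (u (y, 0)) ^ 2} := by
  have hΩ0 : ∀ p ∈ Ω, 0 ≤ p.2 := by
    obtain ⟨U, -, rfl⟩ := hΩ
    exact fun p hp => hp.2
  have hud := uniqueDiffOn_of_relativelyOpen hΩ
  have hsm : ∀ p ∈ Ω, 0 < p.2 → ContDiffAt ℝ 3 u p := fun p hp hp0 =>
    (hu_smooth.contDiffAt (inter_mem (mem_nhds_of_relativelyOpen hΩ hp hp0)
      (continuous_snd.continuousAt.eventually (lt_mem_nhds hp0)))).of_le (WithTop.coe_le_coe.2 (le_top : (3 : ℕ∞) ≤ ⊤))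
  have hcurry : ∀ p ∈ Ω, fderivWithin ℝ u Ω p =
      continuousMultilinearCurryFin1 ℝ (EuclideanSpace ℝ (Fin (n + 1)) × ℝ) ℝ (iteratedFDerivWithin ℝ 1 u Ω p) := by
    intro p hp
    refine ContinuousLinearMap.ext fun v => ?_
    rw [continuousMultilinearCurryFin1_apply, iteratedFDerivWithin_one_apply (hud p hp)]
    rfl
  have hB : ContinuousOn (fderivWithin ℝ u Ω) Ω := by
    intro p hp
    obtain ⟨g, hg, hgu⟩ := hu_deriv_ext (p.2 + 1) (by linarith [hΩ0 p hp]) 1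
    have h1 : ContinuousOn (fderivWithin ℝ u Ω) (Ω ∩ {p' | p'.2 ≤ p.2 + 1}) := by
      refine ((continuousMultilinearCurryFin1 ℝ (EuclideanSpace ℝ (Fin (n + 1)) × ℝ) ℝ).continuous.comp_continuousOn
        (hg.mono subset_closure)).congr fun y hy => ?_
      rw [hcurry y hy.1, Function.comp_apply, hgu y hy]
    refine (h1 p ⟨hp, by simp⟩).mono_of_mem_nhdsWithin
      (inter_mem self_mem_nhdsWithin (mem_nhdsWithin_of_mem_nhds ?_))
    filter_upwards [continuous_snd.continuousAt.eventually
      (gt_mem_nhds (show p.2 < p.2 + 1 by linarith))] with y hy using le_of_lt hy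
  have hdw := fun p (hp : p ∈ Ω) => hasFDerivWithinAt_fderivWithin_of_relativelyOpen hΩ hu_cont
    (fun q hq hq0 => (hsm q hq hq0).differentiableAt (by norm_num)) hB hp
  have hgrad : ∀ p ∈ Ω, gradFn u p.1 p.2 = √(1 + ‖spatialVec (fderivWithin ℝ u Ω p)‖ ^ 2) :=
    fun p hp => by rw [gradFn, spatialGrad_eq_spatialVec_fderivWithin hΩ hp (hdw p hp)]
  set P := fun p => spatialVec (fderivWithin ℝ u Ω p) with hPdef
  have hPc : ContinuousOn P Ω := spatialVec.continuous.comp_continuousOn hB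
  have hPbd : ∀ T > (0 : ℝ), ∃ C, ∀ p ∈ Ω, p.2 ≤ T → 1 + ‖P p‖ ^ 2 ≤ C := by
    intro T hT
    obtain ⟨C, hC⟩ := hu_deriv_bd T hT 1
    refine ⟨1 + (‖spatialVec (m := n + 1)‖ * C) ^ 2, fun p hp hpT => ?_⟩
    have h1 : ‖fderivWithin ℝ u Ω p‖ ≤ C := by
      rw [hcurry p hp, LinearIsometryEquiv.norm_map]
      exact hC p ⟨hp, hpT⟩
    have h2 := (spatialVec (m := n + 1)).le_opNorm (fderivWithin ℝ u Ω p)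
    have h3 := h2.trans (mul_le_mul_of_nonneg_left h1 (norm_nonneg _))
    gcongr
  intro p hp hup
  set R := {r : ℝ | ∃ y, (y, (0 : ℝ)) ∈ Ω ∧ u (y, 0) < 0 ∧ r = gradFn u y 0 * (u (y, 0)) ^ 2}
    with hR
  have hRbdd : BddAbove R := by
    obtain ⟨C, hC⟩ := hPbd 1 one_pos
    obtain ⟨C₀, hC₀⟩ := hu_deriv_bd 1 one_pos 0
    refine ⟨√C * C₀ ^ 2, ?_⟩
    rintro _ ⟨y, hy, -, rfl⟩
    have h1 := hC _ hy zero_le_one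
    have h2 := hC₀ (y, 0) ⟨hy, zero_le_one (α := ℝ)⟩
    rw [norm_iteratedFDerivWithin_zero, Real.norm_eq_abs] at h2
    have h3 : u (y, 0) ^ 2 ≤ C₀ ^ 2 := by rw [← sq_abs]; gcongr
    rw [hgrad _ hy]
    gcongr
  have hS0 : 0 ≤ sSup R := Real.sSup_nonneg (by
    rintro _ ⟨y, -, -, rfl⟩
    exact mul_nonneg (Real.sqrt_nonneg _) (sq_nonneg _))
  set G := fun q => (1 + ‖P q‖ ^ 2) * u q ^ 4 with hG
  have hGc : ContinuousOn G Ω := ((hPc.norm.pow 2).const_add 1).mul (hu_cont.pow 4)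
  have hp0 := hΩ0 p hp
  have hpG : 1 + ‖P p‖ ^ 2 ≤ G p := by
    have : 1 ≤ u p ^ 4 := by
      have : 1 ≤ (-u p) ^ 4 := one_le_pow₀ (by linarith)
      rwa [Even.neg_pow (by decide)] at this
    exact le_mul_of_one_le_right (by positivity) this
  suffices h : G p ≤ sSup R ^ 2 by
    rw [hgrad p hp]
    exact Real.sqrt_le_iff.2 ⟨hS0, hpG.trans h⟩
  by_contra! hlt
  -- a small time penalisation
  obtain ⟨ε, hε, hεp⟩ : ∃ ε > 0, sSup R ^ 2 < G p - ε * p.2 := by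
    refine ⟨(G p - sSup R ^ 2) / (2 * (p.2 + 1)), div_pos (by linarith) (by linarith), ?_⟩
    have : (G p - sSup R ^ 2) / (2 * (p.2 + 1)) * p.2 ≤ (G p - sSup R ^ 2) / 2 := by
      rw [div_mul_eq_mul_div, div_le_div_iff₀ (by linarith) (by norm_num)]
      nlinarith
    linarith
  have hc : 0 < G p - ε * p.2 := (sq_nonneg _).trans_lt hεp
  obtain ⟨C, hC⟩ := hPbd (p.2 + 1) (by linarith)
  have hC1 : 0 < C := lt_of_lt_of_le (by positivity) (hC p hp (by linarith))
  -- a level so close to `0` that the maximum is not attained near it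
  obtain ⟨δ, hδ, hδ1, hδC⟩ : ∃ δ > 0, δ ≤ 1 ∧ C * δ ^ 4 < G p - ε * p.2 := by
    refine ⟨min 1 ((G p - ε * p.2) / (2 * C)), by positivity, min_le_left _ _, ?_⟩
    set δ := min 1 ((G p - ε * p.2) / (2 * C)) with hδ
    have h0 : 0 < δ := by positivity
    have h1 : δ ^ 4 ≤ δ := pow_le_of_le_one h0.le (min_le_left _ _) (by norm_num)
    have h2 : C * δ ≤ (G p - ε * p.2) / 2 := by
      have : δ ≤ (G p - ε * p.2) / (2 * C) := min_le_right _ _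
      rw [le_div_iff₀ (by positivity)] at this
      linarith
    have := mul_le_mul_of_nonneg_left h1 hC1.le
    linarith
  have hK := isCompact_sublevel_of_tendsto_zero hΩ0 hu_cont hu_zero (T := p.2) hδ
    ((hΩ_bdd (p.2 + 1) (by linarith)).subset
      (inter_subset_inter_right _ fun q (hq : q.2 ≤ p.2) => show q.2 ≤ p.2 + 1 by linarith))
  set K := {q | q ∈ Ω ∧ q.2 ≤ p.2 ∧ u q ≤ -δ} with hKdef
  have hpK : p ∈ K := ⟨hp, le_rfl, by linarith⟩
  obtain ⟨q, ⟨hqΩ, hqT, hqδ⟩, hqmax⟩ := hK.exists_isMaxOn ⟨p, hpK⟩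
    (f := fun q => G q - ε * q.2)
    ((hGc.mono fun q hq => hq.1).sub (continuous_snd.const_mul ε).continuousOn)
  have hqp : G p - ε * p.2 ≤ G q - ε * q.2 := hqmax hpK
  have hq0 := hΩ0 q hqΩ
  rcases hq0.eq_or_lt with hq0 | hq0
  · -- the maximum is attained initially
    obtain ⟨y, t⟩ := q
    obtain rfl : (0 : ℝ) = t := hq0
    have hmem : gradFn u y 0 * u (y, 0) ^ 2 ∈ R := ⟨y, hqΩ, by linarith, rfl⟩
    have hle := le_csSup hRbdd hmem
    have h0 : 0 ≤ gradFn u y 0 * u (y, 0) ^ 2 := mul_nonneg (Real.sqrt_nonneg _) (sq_nonneg _)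
    have hsq : (gradFn u y 0 * u (y, 0) ^ 2) ^ 2 = G (y, 0) := by
      rw [hgrad _ hqΩ, mul_pow, Real.sq_sqrt (by positivity)]
      ring
    have := pow_le_pow_left₀ h0 hle 2
    rw [hsq] at this
    simp only [mul_zero, sub_zero] at hqp
    linarith
  · have hqδ' : u q < -δ := by
      refine lt_of_le_of_ne hqδ fun h => ?_
      have h1 := hC q hqΩ (by linarith)
      have h2 : G q ≤ C * δ ^ 4 := by
        simp only [hG, h, Even.neg_pow (show Even 4 by decide)]
        gcongr
      have : 0 ≤ ε * q.2 := by positivity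
      linarith
    have hnhds := mem_nhds_of_relativelyOpen hΩ hqΩ hq0
    have hnear : ∀ᶠ y in 𝓝 q, y ∈ Ω ∧ 0 < y.2 ∧ u y < -δ := by
      filter_upwards [hnhds, continuous_snd.continuousAt.eventually (lt_mem_nhds hq0),
        (hu_cont.continuousAt hnhds).eventually (gt_mem_nhds hqδ')] with y h1 h2 h3
      exact ⟨h1, h2, h3⟩
    have hfd : ∀ y ∈ Ω, 0 < y.2 → P y = spatialVec (fderiv ℝ u y) := fun y hy hy0 => by
      rw [hPdef, ← fderivWithin_of_mem_nhds (mem_nhds_of_relativelyOpen hΩ hy hy0)]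
    refine mcf_no_interior_max (hsm q hqΩ hq0) ?_ (by linarith) hε ?_
    · filter_upwards [hnear] with y hy using hu_eq y hy.1 hy.2.1
    · filter_upwards [hnear] with y hy hyq
      rw [← hfd y hy.1 hy.2.1, ← hfd q hqΩ hq0]
      exact hqmax ⟨hy.1, hyq.trans hqT, hy.2.2.le⟩
end
end

section
/- Let n ≥ 1 and let u : ℝ^{n+1} × [0,∞) → ℝ be a smooth graphical solution to mean curvature flow, i.e. ∂u/∂t = √(1+|Du|²) · div( Du/√(1+|Du|²) ). Let M ≥ 1 be such that |Du(x,t)| ≤ M at all points (x,t) where u(x,t) ≤ 0. Fix x₀ ∈ ℝ^{n+1} and t₁, t₂ ≥ 0. If u(x₀,t₁) ≤ −1 or u(x₀,t₂) ≤ −1, then either |t₁ − t₂| ≥ 1/(8(n+1)M²), or |u(x₀,t₁) − u(x₀,t₂)| / √(|t₁ − t₂|) ≤ √(2(n+1)) · (M+1). -/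
open Set Filter Topology Metric

noncomputable section

open scoped RealInnerProductSpace

/-- At a local minimum the derivative of the gradient field is positive semidefinite. -/
theorem IsLocalMin.inner_fderiv_gradient_nonneg {E : Type*} [NormedAddCommGroup E]
    [InnerProductSpace ℝ E] [CompleteSpace E] {F : E → ℝ} {P : E → E} {B : E →L[ℝ] E} {x : E}
    (hmin : IsLocalMin F x) (hF : ∀ y, HasGradientAt F (P y) y) (hP : HasFDerivAt P B x) (e : E) :
    0 ≤ ⟪B e, e⟫ := by
  have hline : ∀ r : ℝ, HasDerivAt (fun r : ℝ => x + r • e) e r := fun r => by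
    simpa using ((hasDerivAt_id r).smul_const e).const_add x
  have hd : ∀ r : ℝ, HasDerivAt (fun r : ℝ => F (x + r • e)) ⟪P (x + r • e), e⟫ r := fun r => by
    have h := (hF (x + r • e)).hasFDerivAt.comp_hasDerivAt r (hline r)
    simpa [Function.comp_def] using h
  have hdd : HasDerivAt (fun r : ℝ => ⟪P (x + r • e), e⟫) ⟪B e, e⟫ 0 := by
    have hP' : HasFDerivAt P B (x + (0 : ℝ) • e) := by simpa using hP
    have h := (hP'.comp_hasDerivAt (0 : ℝ) (hline 0)).inner ℝ (hasDerivAt_const (0 : ℝ) e)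
    simpa [Function.comp_def] using h
  have hderiv : deriv (fun r : ℝ => F (x + r • e)) = fun r : ℝ => ⟪P (x + r • e), e⟫ :=
    funext fun r => (hd r).deriv
  have hmin0 : IsLocalMin (fun r : ℝ => F (x + r • e)) 0 := by
    have hc : Tendsto (fun r : ℝ => x + r • e) (𝓝 0) (𝓝 x) := by
      simpa using (hline 0).continuousAt.tendsto
    have h := hc.eventually hmin
    simpa [IsLocalMin, IsMinFilter] using h
  by_contra! hneg
  have hmax : IsLocalMax (fun r : ℝ => F (x + r • e)) 0 := by
    refine isLocalMax_of_deriv_deriv_neg ?_ hmin0.deriv_eq_zero (hd 0).continuousAt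
    rw [hderiv, hdd.deriv]
    exact hneg
  have hconst : (fun r : ℝ => F (x + r • e)) =ᶠ[𝓝 0] fun _ => F (x + (0 : ℝ) • e) := by
    filter_upwards [hmin0, hmax] with r h₁ h₂ using le_antisymm h₂ h₁
  have hzero : (fun r : ℝ => ⟪P (x + r • e), e⟫) =ᶠ[𝓝 0] fun _ => 0 := by
    rw [← hderiv]
    simpa using hconst.deriv
  have h0 : ⟪B e, e⟫ = 0 := by
    rw [← hdd.deriv, hzero.deriv_eq]
    simp
  exact hneg.ne h0

theorem EuclideanSpace.sum_coord_smul_single {m : ℕ} (g : EuclideanSpace ℝ (Fin m)) :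
    ∑ i, g i • EuclideanSpace.single i (1 : ℝ) = g := by
  ext j
  simp [Finset.sum_apply, Pi.single_apply]

/-- For a positive semidefinite form `B`, contraction with `I - g gᵀ / (1 + |g|²)` is
nonnegative. -/
theorem inner_self_div_le_trace {m : ℕ}
    (B : EuclideanSpace ℝ (Fin m) →L[ℝ] EuclideanSpace ℝ (Fin m))
    (hB : ∀ e, 0 ≤ ⟪B e, e⟫) (g : EuclideanSpace ℝ (Fin m)) :
    ⟪B g, g⟫ / (1 + ‖g‖ ^ 2) ≤ ∑ i, B (EuclideanSpace.single i 1) i := by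
  set l : ℝ := (1 + ‖g‖ ^ 2)⁻¹ with hl
  have hpos : 0 < 1 + ‖g‖ ^ 2 := by positivity
  have hlv : l * (1 + ‖g‖ ^ 2) = 1 := inv_mul_cancel₀ hpos.ne'
  have key : ∀ i, ⟪B (EuclideanSpace.single i 1 - (l * g i) • g),
      EuclideanSpace.single i 1 - (l * g i) • g⟫ =
      B (EuclideanSpace.single i 1) i - l * ⟪B (g i • EuclideanSpace.single i 1), g⟫
        - l * (g i * B g i) + l ^ 2 * (g i) ^ 2 * ⟪B g, g⟫ := fun i => by
    simp only [map_sub, map_smul, inner_sub_left, inner_sub_right, inner_smul_left,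
      inner_smul_right, EuclideanSpace.inner_single_right, RCLike.conj_to_real]
    simp
    ring
  have hsum : 0 ≤ ∑ i, ⟪B (EuclideanSpace.single i 1 - (l * g i) • g),
      EuclideanSpace.single i 1 - (l * g i) • g⟫ := Finset.sum_nonneg fun i _ => hB _
  have h₁ : ∑ i, ⟪B (g i • EuclideanSpace.single i 1), g⟫ = ⟪B g, g⟫ := by
    rw [← sum_inner, ← map_sum, EuclideanSpace.sum_coord_smul_single]
  have h₂ : ∑ i, g i * B g i = ⟪B g, g⟫ := by
    simp [PiLp.inner_apply]
  have h₃ : ∑ i, (g i) ^ 2 = ‖g‖ ^ 2 := by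
    simp [EuclideanSpace.norm_sq_eq]
  simp only [key, Finset.sum_add_distrib, Finset.sum_sub_distrib, ← Finset.mul_sum,
    ← Finset.sum_mul, h₁, h₂, h₃] at hsum
  rw [div_eq_mul_inv, ← hl]
  have h₄ : l ^ 2 * ‖g‖ ^ 2 = l - l ^ 2 := by linear_combination l * hlv
  rw [h₄] at hsum
  nlinarith [mul_nonneg (sq_nonneg l) (hB g)]

/-- The mean curvature operator in non-divergence form. -/
theorem sqrt_mul_vecDiv_eq {m : ℕ} {g : EuclideanSpace ℝ (Fin m) → EuclideanSpace ℝ (Fin m)}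
    {A : EuclideanSpace ℝ (Fin m) →L[ℝ] EuclideanSpace ℝ (Fin m)} {x : EuclideanSpace ℝ (Fin m)}
    (hg : HasFDerivAt g A x) :
    √(1 + ‖g x‖ ^ 2) * vecDiv (fun y => (√(1 + ‖g y‖ ^ 2))⁻¹ • g y) x =
      ∑ i, A (EuclideanSpace.single i 1) i - ⟪A (g x), g x⟫ / (1 + ‖g x‖ ^ 2) := by
  have hpos : 0 < 1 + ‖g x‖ ^ 2 := by positivity
  have hs : 0 < √(1 + ‖g x‖ ^ 2) := Real.sqrt_pos.2 hpos
  have hsq : √(1 + ‖g x‖ ^ 2) ^ 2 = 1 + ‖g x‖ ^ 2 := Real.sq_sqrt hpos.le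
  have hv : HasFDerivAt (fun y => (√(1 + ‖g y‖ ^ 2))⁻¹) _ x :=
    (hasDerivAt_inv hs.ne').comp_hasFDerivAt x ((hg.norm_sq.const_add 1).sqrt hpos.ne')
  have hX : fderiv ℝ (fun y => (√(1 + ‖g y‖ ^ 2))⁻¹ • g y) x = _ := (hv.smul hg).fderiv
  have hcoord : ∀ i, fderiv ℝ (fun y => (√(1 + ‖g y‖ ^ 2))⁻¹ • g y) x
      (EuclideanSpace.single i 1) i =
      (√(1 + ‖g x‖ ^ 2))⁻¹ * A (EuclideanSpace.single i 1) i
        - (√(1 + ‖g x‖ ^ 2) ^ 3)⁻¹ * ⟪g x, A (g x i • EuclideanSpace.single i 1)⟫ := fun i => by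
    rw [hX]
    simp [inner_smul_right]
    field_simp
    ring
  unfold vecDiv
  simp only [hcoord, Finset.sum_sub_distrib, ← Finset.mul_sum, ← inner_sum, ← map_sum,
    EuclideanSpace.sum_coord_smul_single]
  rw [real_inner_comm (g x), ← hsq, Real.sqrt_sq hs.le]
  field_simp

theorem HasDerivAt.nonpos_of_forall_le {φ : ℝ → ℝ} {φ' s t : ℝ} (hst : s < t)
    (hφ : HasDerivAt φ φ' t) (hmin : ∀ r ∈ Icc s t, φ t ≤ φ r) : φ' ≤ 0 := by
  have h := (hasDerivWithinAt_iff_tendsto_slope' (s := Iio t) (by simp)).1 hφ.hasDerivWithinAt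
  refine le_of_tendsto h ?_
  filter_upwards [Ioo_mem_nhdsLT hst] with r hr
  rw [slope_def_field]
  exact div_nonpos_of_nonneg_of_nonpos (sub_nonneg.2 (hmin r ⟨hr.1.le, hr.2.le⟩))
    (sub_nonpos.2 hr.2.le)

section Slices

variable {m : ℕ} {u : EuclideanSpace ℝ (Fin m) × ℝ → ℝ}

theorem contDiff_slice
    (hu : ContDiffOn ℝ (⊤ : ℕ∞) u {p : EuclideanSpace ℝ (Fin m) × ℝ | 0 ≤ p.2})
    {t : ℝ} (ht : 0 ≤ t) : ContDiff ℝ (⊤ : ℕ∞) fun y => u (y, t) :=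
  hu.comp_contDiff (contDiff_id.prodMk contDiff_const) fun _ => ht

theorem hasGradientAt_slice
    (hu : ContDiffOn ℝ (⊤ : ℕ∞) u {p : EuclideanSpace ℝ (Fin m) × ℝ | 0 ≤ p.2})
    {t : ℝ} (ht : 0 ≤ t) (x : EuclideanSpace ℝ (Fin m)) :
    HasGradientAt (fun y => u (y, t)) (spatialGrad u x t) x :=
  ((contDiff_slice hu ht).differentiable (by simp) x).hasGradientAt

theorem differentiable_spatialGrad
    (hu : ContDiffOn ℝ (⊤ : ℕ∞) u {p : EuclideanSpace ℝ (Fin m) × ℝ | 0 ≤ p.2})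
    {t : ℝ} (ht : 0 ≤ t) : Differentiable ℝ fun y => spatialGrad u y t := by
  have h : ContDiff ℝ 1 (fderiv ℝ fun y => u (y, t)) :=
    (contDiff_slice hu ht).fderiv_right (by norm_cast)
  exact ((InnerProductSpace.toDual ℝ _).symm.toContinuousLinearEquiv.differentiable).comp
    (h.differentiable (by simp))

theorem differentiableAt_time
    (hu : ContDiffOn ℝ (⊤ : ℕ∞) u {p : EuclideanSpace ℝ (Fin m) × ℝ | 0 ≤ p.2})
    {t : ℝ} (ht : 0 < t) (x : EuclideanSpace ℝ (Fin m)) :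
    DifferentiableAt ℝ (fun s => u (x, s)) t := by
  have hmem : {p : EuclideanSpace ℝ (Fin m) × ℝ | 0 ≤ p.2} ∈ 𝓝 (x, t) :=
    continuous_snd.continuousAt.preimage_mem_nhds (Ici_mem_nhds ht)
  exact ((hu.contDiffAt hmem).differentiableAt (by simp)).comp t
    ((differentiableAt_const x).prodMk differentiableAt_id)

theorem continuousOn_time
    (hu : ContDiffOn ℝ (⊤ : ℕ∞) u {p : EuclideanSpace ℝ (Fin m) × ℝ | 0 ≤ p.2})
    (x : EuclideanSpace ℝ (Fin m)) : ContinuousOn (fun s => u (x, s)) (Ici 0) :=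
  hu.continuousOn.comp (by fun_prop) fun _ hs => hs

/-- At a spatial minimum of the squared distance of the graph to `(x₀, c)`, the height above `c`
satisfies the differential inequality obeyed by shrinking spheres. -/
theorem neg_dim_le_of_isLocalMin
    (hu : ContDiffOn ℝ (⊤ : ℕ∞) u {p : EuclideanSpace ℝ (Fin m) × ℝ | 0 ≤ p.2})
    {x x₀ : EuclideanSpace ℝ (Fin m)} {t c : ℝ} (ht : 0 ≤ t) (heq : mcfEqAt u x t)
    (hmin : IsLocalMin (fun y => ‖y - x₀‖ ^ 2 + (u (y, t) - c) ^ 2) x) :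
    -(m : ℝ) ≤ (u (x, t) - c) * deriv (fun s => u (x, s)) t := by
  obtain ⟨A, hA⟩ := differentiable_spatialGrad hu ht x
  set g := fun y => spatialGrad u y t with hg
  set w := u (x, t) - c with hw
  have hgrad : ∀ y, HasGradientAt (fun y => ‖y - x₀‖ ^ 2 + (u (y, t) - c) ^ 2)
      ((2 : ℝ) • ((y - x₀) + (u (y, t) - c) • g y)) y := fun y => by
    have h₁ := ((hasFDerivAt_id y).sub_const x₀).norm_sq
    have h₂ := ((hasGradientAt_slice hu ht y).hasFDerivAt.sub_const c).pow 2
    rw [hasGradientAt_iff_hasFDerivAt]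
    refine (h₁.add h₂).congr_fderiv ?_
    ext e
    simp [hg]
    ring
  have hP := (((hasFDerivAt_id x).sub_const x₀).add
    (((hasGradientAt_slice hu ht x).hasFDerivAt.sub_const c).smul hA)).const_smul (2 : ℝ)
  set B := ContinuousLinearMap.id ℝ (EuclideanSpace ℝ (Fin m)) + (w • A +
    (InnerProductSpace.toDual ℝ _ (g x)).smulRight (g x)) with hB
  have hpsd : ∀ e, 0 ≤ ⟪B e, e⟫ := fun e => by
    have h := hmin.inner_fderiv_gradient_nonneg hgrad hP e
    have h' : 0 ≤ 2 * ⟪B e, e⟫ := by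
      rw [smul_apply, real_inner_smul_left] at h
      exact h
    linarith
  have htr := inner_self_div_le_trace B hpsd (g x)
  have hu_t : deriv (fun s => u (x, s)) t =
      ∑ i, A (EuclideanSpace.single i 1) i - ⟪A (g x), g x⟫ / (1 + ‖g x‖ ^ 2) :=
    heq.trans (sqrt_mul_vecDiv_eq hA)
  have hpos : 0 < 1 + ‖g x‖ ^ 2 := by positivity
  have hBg : ⟪B (g x), g x⟫ = ‖g x‖ ^ 2 * (1 + ‖g x‖ ^ 2) + w * ⟪A (g x), g x⟫ := by
    simp [hB, inner_add_left, inner_smul_left]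
    ring
  have htrB : ∑ i, B (EuclideanSpace.single i 1) i =
      m + ‖g x‖ ^ 2 + w * ∑ i, A (EuclideanSpace.single i 1) i := by
    have hn : ∑ i, g x i * g x i = ‖g x‖ ^ 2 := by
      simp [EuclideanSpace.norm_sq_eq, ← sq]
    simp [hB, Finset.sum_add_distrib, Finset.mul_sum, EuclideanSpace.inner_single_right, hn]
    ring
  rw [hBg, htrB, add_div, mul_div_cancel_right₀ _ hpos.ne', mul_div_assoc] at htr
  rw [hu_t]
  linarith

/-- A graph moving by mean curvature avoids shrinking spheres. -/
theorem sphere_avoidance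
    (hu : ContDiffOn ℝ (⊤ : ℕ∞) u {p : EuclideanSpace ℝ (Fin m) × ℝ | 0 ≤ p.2})
    (heq : ∀ (x : EuclideanSpace ℝ (Fin m)) (t : ℝ), 0 < t → mcfEqAt u x t)
    {x₀ : EuclideanSpace ℝ (Fin m)} {s c R : ℝ} (hs : 0 ≤ s) (hR : 0 ≤ R)
    (hinit : ∀ x, R ^ 2 ≤ ‖x - x₀‖ ^ 2 + (u (x, s) - c) ^ 2)
    {t : ℝ} (hst : s ≤ t) (x : EuclideanSpace ℝ (Fin m)) :
    R ^ 2 ≤ ‖x - x₀‖ ^ 2 + (u (x, t) - c) ^ 2 + 2 * m * (t - s) := by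
  refine le_of_forall_pos_le_add fun δ hδ => ?_
  set ε := δ / (t - s + 1) with hε
  have hts : 0 < t - s + 1 := by linarith
  have hεpos : 0 < ε := by positivity
  have hεle : ε * (t - s) ≤ δ := by
    have : ε * (t - s + 1) = δ := div_mul_cancel₀ _ hts.ne'
    linarith
  set G : EuclideanSpace ℝ (Fin m) × ℝ → ℝ := fun p =>
    ‖p.1 - x₀‖ ^ 2 + (u p - c) ^ 2 + (2 * m + ε) * (p.2 - s) with hG
  suffices h : R ^ 2 ≤ G (x, t) by
    simp only [hG] at h
    linarith
  by_contra! hlt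
  have hm : (0 : ℝ) ≤ m := Nat.cast_nonneg m
  have hball : ∀ p : EuclideanSpace ℝ (Fin m) × ℝ, s ≤ p.2 → G p < R ^ 2 →
      p.1 ∈ closedBall x₀ R := fun p hp hGp => by
    rw [mem_closedBall, dist_eq_norm]
    have h : 0 ≤ (2 * m + ε) * (p.2 - s) := mul_nonneg (by positivity) (by linarith)
    refine abs_le_of_sq_le_sq' ?_ hR |>.2
    simp only [hG] at hGp
    nlinarith [sq_nonneg (u p - c)]
  have hcont : ContinuousOn G (closedBall x₀ R ×ˢ Icc s t) := by
    have hu' : ContinuousOn u (closedBall x₀ R ×ˢ Icc s t) :=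
      hu.continuousOn.mono fun p hp => hs.trans hp.2.1
    fun_prop
  obtain ⟨⟨y, r⟩, hyr, hmin⟩ := ((isCompact_closedBall x₀ R).prod isCompact_Icc).exists_isMinOn
    ⟨(x, t), hball _ hst hlt, hst, le_rfl⟩ hcont
  have hGyr : G (y, r) < R ^ 2 := (hmin ⟨hball _ hst hlt, hst, le_rfl⟩).trans_lt hlt
  have hglob : ∀ p : EuclideanSpace ℝ (Fin m) × ℝ, p.2 ∈ Icc s t → G (y, r) ≤ G p :=
    fun p hp => by
      by_cases hp' : G p < R ^ 2
      · exact hmin ⟨hball p hp.1 hp', hp⟩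
      · linarith
  have hsr : s < r := by
    refine lt_of_le_of_ne hyr.2.1 ?_
    rintro rfl
    have h := hinit y
    simp only [hG, sub_self, mul_zero, add_zero] at hGyr
    linarith
  have hr : 0 < r := hs.trans_lt hsr
  have hspace := neg_dim_le_of_isLocalMin (x₀ := x₀) (c := c) hu hr.le (heq y r hr)
    (Eventually.of_forall fun z => by simpa [hG] using hglob (z, r) hyr.2)
  have hd : HasDerivAt (fun q => G (y, q))
      (2 * (u (y, r) - c) * deriv (fun s => u (y, s)) r + (2 * m + ε)) r := by
    have h := (((((differentiableAt_time hu hr y).hasDerivAt.sub_const c).pow 2).const_add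
      (‖y - x₀‖ ^ 2)).add (((hasDerivAt_id r).sub_const s).const_mul (2 * m + ε)))
    simpa [hG, Pi.add_def] using h
  have htime := hd.nonpos_of_forall_le hsr fun q hq => hglob (y, q) ⟨hq.1, hq.2.trans hyr.2.2⟩
  linarith

theorem ne_center_of_sphere_avoidance
    (hu : ContDiffOn ℝ (⊤ : ℕ∞) u {p : EuclideanSpace ℝ (Fin m) × ℝ | 0 ≤ p.2})
    (heq : ∀ (x : EuclideanSpace ℝ (Fin m)) (t : ℝ), 0 < t → mcfEqAt u x t)
    {x₀ : EuclideanSpace ℝ (Fin m)} {s c R τ : ℝ} (hs : 0 ≤ s) (hR : 0 ≤ R) (hm : 0 < m)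
    (hτ : R ^ 2 = 2 * m * τ)
    (hinit : ∀ x, R ^ 2 ≤ ‖x - x₀‖ ^ 2 + (u (x, s) - c) ^ 2) {t : ℝ} (ht : t ∈ Ico s (s + τ)) :
    u (x₀, t) ≠ c := by
  intro h
  have h' := sphere_avoidance hu heq hs hR hinit ht.1 x₀
  have hm' : (0 : ℝ) < m := Nat.cast_pos.2 hm
  rw [h, hτ] at h'
  simp only [sub_self, norm_zero, ne_eq, OfNat.ofNat_ne_zero, not_false_eq_true, zero_pow,
    zero_add] at h'
  nlinarith [ht.2]

theorem le_center_of_sphere_avoidance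
    (hu : ContDiffOn ℝ (⊤ : ℕ∞) u {p : EuclideanSpace ℝ (Fin m) × ℝ | 0 ≤ p.2})
    (heq : ∀ (x : EuclideanSpace ℝ (Fin m)) (t : ℝ), 0 < t → mcfEqAt u x t)
    {x₀ : EuclideanSpace ℝ (Fin m)} {s c R τ : ℝ} (hs : 0 ≤ s) (hR : 0 ≤ R) (hm : 0 < m)
    (hτ₀ : 0 < τ) (hτ : R ^ 2 = 2 * m * τ)
    (hinit : ∀ x, R ^ 2 ≤ ‖x - x₀‖ ^ 2 + (u (x, s) - c) ^ 2) (hc : u (x₀, s) ≤ c) :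
    u (x₀, s + τ) ≤ c := by
  by_contra! hlt
  have hcont : ContinuousOn (fun r => u (x₀, r)) (Icc s (s + τ)) :=
    (continuousOn_time hu x₀).mono fun r hr => hs.trans hr.1
  obtain ⟨t, ht, htc⟩ := intermediate_value_Icc (by linarith) hcont ⟨hc, hlt.le⟩
  refine ne_center_of_sphere_avoidance hu heq hs hR hm hτ hinit
    ⟨ht.1, lt_of_le_of_ne ht.2 ?_⟩ htc
  rintro rfl
  exact hlt.ne' htc

theorem center_le_of_sphere_avoidance
    (hu : ContDiffOn ℝ (⊤ : ℕ∞) u {p : EuclideanSpace ℝ (Fin m) × ℝ | 0 ≤ p.2})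
    (heq : ∀ (x : EuclideanSpace ℝ (Fin m)) (t : ℝ), 0 < t → mcfEqAt u x t)
    {x₀ : EuclideanSpace ℝ (Fin m)} {s c R τ : ℝ} (hs : 0 ≤ s) (hR : 0 ≤ R) (hm : 0 < m)
    (hτ₀ : 0 < τ) (hτ : R ^ 2 = 2 * m * τ)
    (hinit : ∀ x, R ^ 2 ≤ ‖x - x₀‖ ^ 2 + (u (x, s) - c) ^ 2) (hc : c ≤ u (x₀, s)) :
    c ≤ u (x₀, s + τ) := by
  by_contra! hlt
  have hcont : ContinuousOn (fun r => u (x₀, r)) (Icc s (s + τ)) :=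
    (continuousOn_time hu x₀).mono fun r hr => hs.trans hr.1
  obtain ⟨t, ht, htc⟩ := intermediate_value_Icc' (by linarith) hcont ⟨hlt.le, hc⟩
  refine ne_center_of_sphere_avoidance hu heq hs hR hm hτ hinit
    ⟨ht.1, lt_of_le_of_ne ht.2 ?_⟩ htc
  rintro rfl
  exact hlt.ne htc

end Slices

/-- A function on a real inner product space whose gradient is bounded by `M` on `{f ≤ 0}`
satisfies a one-sided Lipschitz bound below any nonpositive value. -/
theorem sub_mul_norm_le_of_gradient_le {E : Type*} [NormedAddCommGroup E]
    [InnerProductSpace ℝ E] [CompleteSpace E] {f : E → ℝ} {g : E → E} {M : ℝ} (hM : 0 ≤ M)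
    (hf : ∀ y, HasGradientAt f (g y) y) (hg : ∀ y, f y ≤ 0 → ‖g y‖ ≤ M) (x y : E) {a : ℝ}
    (ha : a ≤ 0) (hax : a ≤ f x) : a - M * ‖y - x‖ ≤ f y := by
  have hline : ∀ r : ℝ, HasDerivAt (fun r : ℝ => x + r • (y - x)) (y - x) r := fun r => by
    simpa using ((hasDerivAt_id r).smul_const (y - x)).const_add x
  have hd : ∀ r : ℝ, HasDerivAt (fun r : ℝ => f (x + r • (y - x)))
      ⟪g (x + r • (y - x)), y - x⟫ r := fun r => by
    simpa [Function.comp_def] using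
      (hf (x + r • (y - x))).hasFDerivAt.comp_hasDerivAt r (hline r)
  set K := M * ‖y - x‖ with hK
  have hK0 : 0 ≤ K := by positivity
  by_contra! hlt
  set S : Set ℝ := {r ∈ Icc (0 : ℝ) 1 | a ≤ f (x + r • (y - x))} with hS
  have hcont : Continuous fun r : ℝ => f (x + r • (y - x)) :=
    continuous_iff_continuousAt.2 fun r => (hd r).continuousAt
  have hScomp : IsCompact S :=
    isCompact_Icc.inter_right (isClosed_le continuous_const hcont)
  obtain ⟨q, hqS, hq⟩ := hScomp.exists_isGreatest ⟨0, by simpa [hS] using hax⟩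
  have hbelow : ∀ r ∈ Ioo q 1, f (x + r • (y - x)) < a := fun r hr => by
    by_contra! h
    exact absurd (hq ⟨⟨hqS.1.1.trans hr.1.le, hr.2.le⟩, h⟩) (not_le.2 hr.1)
  have hmono : MonotoneOn (fun r : ℝ => f (x + r • (y - x)) + K * r) (Icc q 1) := by
    refine monotoneOn_of_deriv_nonneg (convex_Icc q 1)
      (hcont.add (continuous_const.mul continuous_id)).continuousOn ?_ ?_
    · exact fun r _ => ((hd r).add ((hasDerivAt_id r).const_mul K)).differentiableAt
        |>.differentiableWithinAt
    · intro r hr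
      rw [interior_Icc] at hr
      have h := ((hd r).add ((hasDerivAt_id r).const_mul K)).deriv
      have h' : deriv (fun r : ℝ => f (x + r • (y - x)) + K * r) r =
        ⟪g (x + r • (y - x)), y - x⟫ + K * 1 := h
      rw [h']
      have h₁ := abs_le.1 (abs_real_inner_le_norm (g (x + r • (y - x))) (y - x))
      have h₂ : ‖g (x + r • (y - x))‖ * ‖y - x‖ ≤ K :=
        mul_le_mul_of_nonneg_right (hg _ ((hbelow r hr).le.trans ha)) (norm_nonneg _)
      linarith [h₁.1]
  have h := hmono ⟨le_rfl, hqS.1.2⟩ ⟨hqS.1.2, le_rfl⟩ hqS.1.2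
  simp only [one_smul, add_sub_cancel] at h
  nlinarith [hqS.2, mul_nonneg hK0 hqS.1.1]

/-- The time Hölder estimate for ordered times, in terms of the radius of the barrier sphere. -/
theorem mcf_holder_of_lt {m : ℕ} (hm : 0 < m) {u : EuclideanSpace ℝ (Fin m) × ℝ → ℝ}
    (hu : ContDiffOn ℝ (⊤ : ℕ∞) u {p : EuclideanSpace ℝ (Fin m) × ℝ | 0 ≤ p.2})
    (heq : ∀ (x : EuclideanSpace ℝ (Fin m)) (t : ℝ), 0 < t → mcfEqAt u x t)
    {M : ℝ} (hM : 1 ≤ M)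
    (hgrad : ∀ (x : EuclideanSpace ℝ (Fin m)) (t : ℝ), 0 ≤ t → u (x, t) ≤ 0 →
      ‖spatialGrad u x t‖ ≤ M)
    {x₀ : EuclideanSpace ℝ (Fin m)} {s τ R : ℝ} (hs : 0 ≤ s) (hτ₀ : 0 < τ) (hR : 0 ≤ R)
    (hτ : R ^ 2 = 2 * m * τ) (hRM : R * M < 1 / 2)
    (hneg : u (x₀, s) ≤ -1 ∨ u (x₀, s + τ) ≤ -1) :
    |u (x₀, s) - u (x₀, s + τ)| ≤ (M + 1) * R := by
  have hM0 : 0 ≤ M := by linarith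
  have hlow : ∀ x y : EuclideanSpace ℝ (Fin m), ∀ a : ℝ, a ≤ 0 → a ≤ u (x, s) →
      a - M * ‖y - x‖ ≤ u (y, s) := fun x y a ha hax =>
    sub_mul_norm_le_of_gradient_le (f := fun y => u (y, s)) hM0 (hasGradientAt_slice hu hs)
      (fun y hy => hgrad y s hs hy) x y ha hax
  have hMR : 0 ≤ (M + 1) * R := by positivity
  have hRM' : R ≤ R * M := le_mul_of_one_le_right hR hM
  have lower : ∀ a : ℝ, a ≤ 0 → a ≤ u (x₀, s) → a - (M + 1) * R ≤ u (x₀, s + τ) := by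
    intro a ha hax
    refine center_le_of_sphere_avoidance hu heq hs hR hm hτ₀ hτ (fun x => ?_) (by linarith)
    rcases le_total R ‖x - x₀‖ with h | h
    · nlinarith [sq_nonneg (u (x, s) - (a - (M + 1) * R))]
    · have h₁ := hlow x₀ x a ha hax
      have h₂ : R ≤ u (x, s) - (a - (M + 1) * R) := by
        nlinarith [mul_le_mul_of_nonneg_left h hM0]
      nlinarith [sq_nonneg ‖x - x₀‖]
  have hs1 : u (x₀, s) ≤ 0 → u (x₀, s) - u (x₀, s + τ) ≤ (M + 1) * R := fun h => by
    linarith [lower _ h le_rfl]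
  have hneg0 : u (x₀, s) ≤ 0 := by
    by_contra! h
    have h' := lower 0 le_rfl h.le
    rcases hneg with h₁ | h₁ <;> nlinarith
  have upper : u (x₀, s) ≤ -1 → u (x₀, s + τ) ≤ u (x₀, s) + (M + 1) * R := by
    intro h₀
    refine le_center_of_sphere_avoidance hu heq hs hR hm hτ₀ hτ (fun x => ?_) (by linarith)
    rcases le_total R ‖x - x₀‖ with h | h
    · nlinarith [sq_nonneg (u (x, s) - (u (x₀, s) + (M + 1) * R))]
    · have hMx := mul_le_mul_of_nonneg_left h hM0
      have h₁ := hlow x x₀ (min (u (x, s)) 0) (min_le_right _ _) (min_le_left _ _)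
      rw [norm_sub_rev] at h₁
      have h₂ : min (u (x, s)) 0 = u (x, s) := by
        rcases min_choice (u (x, s)) 0 with h' | h'
        · exact h'
        · rw [h'] at h₁
          nlinarith
      rw [h₂] at h₁
      have h₃ : R ≤ (u (x₀, s) + (M + 1) * R) - u (x, s) := by nlinarith
      nlinarith [sq_nonneg ‖x - x₀‖]
  rw [abs_le]
  refine ⟨?_, hs1 hneg0⟩
  rcases le_or_gt (u (x₀, s)) (-1) with h | h
  · linarith [upper h]
  · have h₁ := hneg.resolve_left (not_le.2 h)
    linarith

/-- **Hölder estimate in time.**  Let `u : ℝ^{n+1} × [0,∞) → ℝ` be a smooth graphical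
solution to mean curvature flow and `M ≥ 1` with `|Du(x,t)| ≤ M` wherever `u(x,t) ≤ 0`.
If `u(x₀,t₁) ≤ -1` or `u(x₀,t₂) ≤ -1`, then `|t₁-t₂| ≥ 1/(8(n+1)M²)` or
`|u(x₀,t₁) - u(x₀,t₂)| ≤ √(2(n+1))·(M+1)·√|t₁-t₂|`. -/
theorem mcf_holder_in_time (n : ℕ) (hn : 1 ≤ n)
    (u : EuclideanSpace ℝ (Fin (n + 1)) × ℝ → ℝ)
    -- u is a smooth graphical solution to mean curvature flow on ℝ^{n+1} × [0,∞)
    (hu_smooth : ContDiffOn ℝ (⊤ : ℕ∞) u {p : EuclideanSpace ℝ (Fin (n + 1)) × ℝ | 0 ≤ p.2})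
    (hu_eq : ∀ (x : EuclideanSpace ℝ (Fin (n + 1))) (t : ℝ), 0 < t → mcfEqAt u x t)
    (M : ℝ) (hM : 1 ≤ M)
    -- |Du(x,t)| ≤ M at all points where u(x,t) ≤ 0
    (hgrad : ∀ (x : EuclideanSpace ℝ (Fin (n + 1))) (t : ℝ), 0 ≤ t → u (x, t) ≤ 0 →
      ‖spatialGrad u x t‖ ≤ M)
    (x₀ : EuclideanSpace ℝ (Fin (n + 1))) (t₁ t₂ : ℝ) (ht₁ : 0 ≤ t₁) (ht₂ : 0 ≤ t₂)
    (hneg : u (x₀, t₁) ≤ -1 ∨ u (x₀, t₂) ≤ -1) :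
    1 / (8 * (n + 1) * M ^ 2) ≤ |t₁ - t₂| ∨
      |u (x₀, t₁) - u (x₀, t₂)| ≤
        Real.sqrt (2 * (n + 1)) * (M + 1) * Real.sqrt |t₁ - t₂| := by
  by_cases hbig : 1 / (8 * (n + 1) * M ^ 2) ≤ |t₁ - t₂|
  · exact Or.inl hbig
  refine Or.inr ?_
  rw [not_le] at hbig
  have hn0 : (0 : ℝ) < n + 1 := by positivity
  have key : ∀ s t : ℝ, 0 ≤ s → s < t → |s - t| < 1 / (8 * (n + 1) * M ^ 2) →
      (u (x₀, s) ≤ -1 ∨ u (x₀, t) ≤ -1) →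
      |u (x₀, s) - u (x₀, t)| ≤ √(2 * (n + 1)) * (M + 1) * √|s - t| := by
    intro s t hs hst hsmall hneg
    obtain ⟨τ, rfl⟩ : ∃ τ, t = s + τ := ⟨t - s, by ring⟩
    have hτ : 0 < τ := by linarith
    have habs : |s - (s + τ)| = τ := by
      rw [sub_add_cancel_left, abs_neg, abs_of_pos hτ]
    rw [habs] at hsmall ⊢
    set R := √(2 * (n + 1)) * √τ with hR
    have hR0 : 0 ≤ R := by positivity
    have hRsq : R ^ 2 = 2 * (n + 1) * τ := by
      rw [hR, mul_pow, Real.sq_sqrt (by positivity), Real.sq_sqrt hτ.le]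
    have hRM : R * M < 1 / 2 := by
      rw [lt_div_iff₀ (by positivity)] at hsmall
      refine lt_of_pow_lt_pow_left₀ 2 (by norm_num) ?_
      rw [mul_pow, hRsq]
      nlinarith
    have h := mcf_holder_of_lt n.succ_pos hu_smooth hu_eq hM hgrad hs hτ hR0
      (by push_cast; exact hRsq) hRM hneg
    calc _ ≤ (M + 1) * R := h
      _ = _ := by rw [hR]; ring
  rcases lt_trichotomy t₁ t₂ with h | h | h
  · exact key t₁ t₂ ht₁ h hbig hneg
  · subst h
    simp
  · rw [abs_sub_comm (u (x₀, t₁)), abs_sub_comm t₁]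
    rw [abs_sub_comm] at hbig
    exact key t₂ t₁ ht₂ h hbig hneg.symm
end
end
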